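/- Let κ > 0 and let U ⊆ ℝ² be an open connected set whose complement K = ℝ² \ U is compact. Let L = {x₀ + sθ : s ∈ ℝ} be a straight line (x₀ ∈ ℝ², θ a unit vector) with L ⊆ U, and let Λ ⊆ L be a nonempty open subinterval of L. If ψ₁ and ψ₂ are radiation solutions on U such that Im ψ₁(x) = Im ψ₂(x) for all x ∈ Λ, then ψ₁(x) = ψ₂(x) for all x ∈ L. -/

import Mathlib

noncomputable section

open Real MeasureTheory Set

/-- The plane `ℝ²`. -/
abbrev R2 : Type := EuclideanSpace ℝ (Fin 2)

/-- The Laplacian of a complex-valued function on `ℝ²`, as the sum of the second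
derivatives along the standard coordinate directions. -/
def laplacian2 (f : R2 → ℂ) (x : R2) : ℂ :=
  ∑ i : Fin 2,
    fderiv ℝ (fun y => fderiv ℝ f y (EuclideanSpace.single i 1)) x (EuclideanSpace.single i 1)

/-- `ψ` is a radiation solution of the Helmholtz equation `Δψ + κ²ψ = 0` on `U`:
it is `C²` on `U`, satisfies the Helmholtz equation on `U`, and satisfies the
Sommerfeld radiation condition
`√|x| (∂ψ/∂|x| − iκψ)(x) → 0` as `|x| → ∞`, uniformly in `x/|x|`. -/
def IsRadiationSolution (κ : ℝ) (U : Set R2) (ψ : R2 → ℂ) : Prop :=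
  ContDiffOn ℝ 2 ψ U ∧
  (∀ x ∈ U, laplacian2 ψ x + (κ : ℂ) ^ 2 * ψ x = 0) ∧
  ∀ ε > 0, ∃ R > 0, ∀ x ∈ U, R ≤ ‖x‖ →
    ‖(Real.sqrt ‖x‖ : ℂ) *
      (fderiv ℝ ψ x (‖x‖⁻¹ • x) - Complex.I * (κ : ℂ) * ψ x)‖ < ε

open Filter Topology

/-- A square root of `u² - 2iu` for `u > 0`. -/
def hankelRoot (u : ℝ) : ℂ := u * (1 - 2 * Complex.I / u) ^ (2⁻¹ : ℂ)

lemma one_sub_mem_slitPlane (u : ℝ) : (1 - 2 * Complex.I / u : ℂ) ∈ Complex.slitPlane := by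
  left
  simp [Complex.div_re]

lemma hankelRoot_sq {u : ℝ} (hu : 0 < u) : hankelRoot u ^ 2 = u * (u - 2 * Complex.I) := by
  have hu' : (u : ℂ) ≠ 0 := by exact_mod_cast hu.ne'
  have := Complex.cpow_nat_inv_pow (1 - 2 * Complex.I / u) (n := 2) (by norm_num)
  push_cast at this
  rw [hankelRoot, mul_pow, this]
  field_simp

lemma hankelRoot_ne_zero {u : ℝ} (hu : 0 < u) : hankelRoot u ≠ 0 := by
  intro h
  have h2 := hankelRoot_sq hu
  rw [h] at h2
  have := congrArg Complex.im h2
  simp at this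
  exact hu.ne' this

lemma norm_hankelRoot_sq {u : ℝ} (hu : 0 < u) : ‖hankelRoot u‖ ^ 2 = u * ‖(u - 2 * Complex.I : ℂ)‖ := by
  rw [← norm_pow, hankelRoot_sq hu, norm_mul, Complex.norm_real, Real.norm_of_nonneg hu.le]

lemma le_norm_hankelRoot {u : ℝ} (hu : 0 < u) : u ≤ ‖hankelRoot u‖ := by
  have h1 : u ≤ ‖(u - 2 * Complex.I : ℂ)‖ := by
    simpa using (Complex.re_le_norm (u - 2 * Complex.I : ℂ))
  have := norm_hankelRoot_sq hu
  nlinarith [norm_nonneg (hankelRoot u)]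

lemma sqrt_le_norm_hankelRoot {u : ℝ} (hu : 0 < u) : √u ≤ ‖hankelRoot u‖ := by
  have h1 : 2 ≤ ‖(u - 2 * Complex.I : ℂ)‖ := by
    simpa using (Complex.abs_im_le_norm (u - 2 * Complex.I : ℂ))
  rw [Real.sqrt_le_left (norm_nonneg _), norm_hankelRoot_sq hu]
  nlinarith

lemma norm_hankelRoot_sq_le {u : ℝ} (hu : 0 < u) : ‖hankelRoot u‖ ^ 2 ≤ u * (u + 2) := by
  rw [norm_hankelRoot_sq hu]
  gcongr
  refine (norm_sub_le _ _).trans ?_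
  simp [abs_of_pos hu]

lemma hasDerivAt_hankelRoot {u : ℝ} (hu : 0 < u) :
    HasDerivAt hankelRoot ((u - Complex.I) / hankelRoot u) u := by
  have hu' : (u : ℂ) ≠ 0 := by exact_mod_cast hu.ne'
  have h0 : HasDerivAt (fun z : ℂ => z * (1 - 2 * Complex.I / z) ^ (2⁻¹ : ℂ))
      ((u - Complex.I) / hankelRoot u) u := by
    have h1 : HasDerivAt (fun z : ℂ => 1 - 2 * Complex.I / z) (2 * Complex.I / u ^ 2) (u : ℂ) := by
      have := ((hasDerivAt_inv hu').const_mul (2 * Complex.I)).const_sub 1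
      convert! this using 1
      field_simp
    have h2 := (hasDerivAt_id (u : ℂ)).mul (h1.cpow_const (c := (2⁻¹ : ℂ)) (one_sub_mem_slitPlane u))
    convert! h2 using 1
    have hp : (1 - 2 * Complex.I / u : ℂ) ≠ 0 := Complex.slitPlane_ne_zero (one_sub_mem_slitPlane u)
    have hs := Complex.cpow_nat_inv_pow (1 - 2 * Complex.I / u) (n := 2) (by norm_num)
    push_cast at hs
    rw [Complex.cpow_sub _ _ hp, hankelRoot, Complex.cpow_one, id]
    set p := (1 - 2 * Complex.I / u : ℂ) ^ (2⁻¹ : ℂ) with hpdef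
    have hp0 : p ≠ 0 := by
      intro h
      rw [h] at hs
      exact hp (by rw [← hs]; ring)
    rw [← hs]
    have h3 : p ^ 2 * u = u - 2 * Complex.I := by
      rw [hs]; field_simp
    field_simp
    linear_combination (-1) * h3
  exact h0.comp_ofReal

lemma continuousOn_hankelRoot : ContinuousOn hankelRoot (Ioi 0) :=
  fun _ hu => (hasDerivAt_hankelRoot hu).continuousAt.continuousWithinAt

lemma tendsto_hankelRoot_zero : Tendsto hankelRoot (𝓝[>] 0) (𝓝 0) := by
  have h : Tendsto (fun u : ℝ => √(u * (u + 2))) (𝓝[>] 0) (𝓝 0) := by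
    have : Continuous fun u : ℝ => √(u * (u + 2)) := by fun_prop
    simpa using (this.tendsto 0).mono_left nhdsWithin_le_nhds
  refine squeeze_zero_norm' ?_ h
  filter_upwards [self_mem_nhdsWithin] with u hu
  exact Real.le_sqrt_of_sq_le (norm_hankelRoot_sq_le hu)

lemma tendsto_div_hankelRoot : Tendsto (fun u : ℝ => (u : ℂ) / hankelRoot u) atTop (𝓝 1) := by
  have h1 : Tendsto (fun u : ℝ => (1 - 2 * Complex.I / u : ℂ)) atTop (𝓝 1) := by
    have : Tendsto (fun u : ℝ => ((u⁻¹ : ℝ) : ℂ)) atTop (𝓝 ((0 : ℝ) : ℂ)) :=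
      (Complex.continuous_ofReal.tendsto 0).comp tendsto_inv_atTop_zero
    have := (this.const_mul (2 * Complex.I)).const_sub 1
    simpa [div_eq_mul_inv] using this
  have h2 : Tendsto (fun u : ℝ => ((1 - 2 * Complex.I / u : ℂ) ^ (2⁻¹ : ℂ))⁻¹) atTop (𝓝 1) := by
    have := h1.cpow (tendsto_const_nhds (x := (2⁻¹ : ℂ))) (by simp)
    simpa using this.inv₀ (by simp)
  refine h2.congr' ?_
  filter_upwards [eventually_gt_atTop 0] with u hu
  have hu' : (u : ℂ) ≠ 0 := by exact_mod_cast hu.ne'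
  rw [hankelRoot]
  field_simp

/-- The Laplace-type integrals from which the outgoing Hankel function is built. -/
def hankelLaplace (k : ℕ) (z : ℂ) : ℂ :=
  ∫ u in Ioi (0 : ℝ), (-u : ℂ) ^ k * Complex.exp (-z * u) * (hankelRoot u)⁻¹

lemma integrableOn_rpow_mul_exp_neg_mul {s b : ℝ} (hs : -1 < s) (hb : 0 < b) :
    IntegrableOn (fun u : ℝ => u ^ s * rexp (-b * u)) (Ioi 0) := by
  simpa using integrableOn_rpow_mul_exp_neg_mul_rpow hs one_pos hb

lemma norm_hankelLaplace_integrand_le (k : ℕ) {z : ℂ} {b u : ℝ} (hb : b ≤ z.re) (hu : 0 < u) :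
    ‖(-u : ℂ) ^ k * Complex.exp (-z * u) * (hankelRoot u)⁻¹‖ ≤
      u ^ ((k : ℝ) - 1 / 2) * rexp (-b * u) := by
  rw [norm_mul, norm_mul, norm_pow, norm_neg, Complex.norm_real, Real.norm_of_nonneg hu.le,
    Complex.norm_exp, norm_inv, Real.rpow_sub hu, Real.rpow_natCast, ← Real.sqrt_eq_rpow]
  have h1 : ‖hankelRoot u‖⁻¹ ≤ (√u)⁻¹ :=
    inv_anti₀ (Real.sqrt_pos.2 hu) (sqrt_le_norm_hankelRoot hu)
  have h2 : rexp (-z * u).re ≤ rexp (-b * u) := by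
    apply Real.exp_le_exp.2
    simp
    nlinarith
  calc u ^ k * rexp (-z * u).re * ‖hankelRoot u‖⁻¹ ≤ u ^ k * rexp (-b * u) * (√u)⁻¹ := by gcongr
    _ = _ := by ring

lemma aestronglyMeasurable_hankelLaplace_integrand (k : ℕ) (z : ℂ) :
    AEStronglyMeasurable (fun u : ℝ => (-u : ℂ) ^ k * Complex.exp (-z * u) * (hankelRoot u)⁻¹)
      (volume.restrict (Ioi 0)) := by
  refine ContinuousOn.aestronglyMeasurable ?_ measurableSet_Ioi
  refine ContinuousOn.mul (by fun_prop) (continuousOn_hankelRoot.inv₀ ?_)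
  exact fun u hu => hankelRoot_ne_zero hu

lemma integrableOn_hankelLaplace_integrand (k : ℕ) {z : ℂ} (hz : 0 < z.re) :
    IntegrableOn (fun u : ℝ => (-u : ℂ) ^ k * Complex.exp (-z * u) * (hankelRoot u)⁻¹) (Ioi 0) := by
  refine Integrable.mono' (integrableOn_rpow_mul_exp_neg_mul (s := (k : ℝ) - 1 / 2) ?_ hz)
    (aestronglyMeasurable_hankelLaplace_integrand k z) ?_
  · have : (0 : ℝ) ≤ k := by positivity
    linarith
  · filter_upwards [ae_restrict_mem measurableSet_Ioi] with u hu
    exact norm_hankelLaplace_integrand_le k le_rfl hu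

lemma hasDerivAt_hankelLaplace (k : ℕ) {z : ℂ} (hz : 0 < z.re) :
    HasDerivAt (hankelLaplace k) (hankelLaplace (k + 1) z) z := by
  have hs : {w : ℂ | z.re / 2 < w.re} ∈ 𝓝 z :=
    (isOpen_lt continuous_const Complex.continuous_re).mem_nhds (by simp; linarith)
  refine (hasDerivAt_integral_of_dominated_loc_of_deriv_le (μ := volume.restrict (Ioi 0))
    (F := fun z u => (-u : ℂ) ^ k * Complex.exp (-z * u) * (hankelRoot u)⁻¹)
    (F' := fun z u => (-u : ℂ) ^ (k + 1) * Complex.exp (-z * u) * (hankelRoot u)⁻¹)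
    (bound := fun u => u ^ (((k + 1 : ℕ) : ℝ) - 1 / 2) * rexp (-(z.re / 2) * u)) hs
    (Eventually.of_forall fun w => aestronglyMeasurable_hankelLaplace_integrand k w)
    (integrableOn_hankelLaplace_integrand k hz)
    (aestronglyMeasurable_hankelLaplace_integrand _ z) ?_
    (integrableOn_rpow_mul_exp_neg_mul ?_ (by linarith)) ?_).2
  · filter_upwards [ae_restrict_mem measurableSet_Ioi] with u hu w hw
    exact norm_hankelLaplace_integrand_le (k + 1) (le_of_lt hw) hu
  · push_cast
    have : (0 : ℝ) ≤ k := by positivity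
    linarith
  · refine Eventually.of_forall fun u w _ => ?_
    have h1 : HasDerivAt (fun w : ℂ => Complex.exp (-w * u)) (Complex.exp (-w * u) * (-1 * u)) w :=
      ((hasDerivAt_id w).neg.mul_const (u : ℂ)).cexp
    have := (h1.const_mul ((-u : ℂ) ^ k)).mul_const (hankelRoot u)⁻¹
    convert! this using 1
    ring

lemma norm_hankelLaplace_le (k : ℕ) {z : ℂ} (hz : 0 < z.re) :
    ‖hankelLaplace k z‖ ≤ (1 / z.re) ^ ((k : ℝ) + 1 / 2) * Real.Gamma ((k : ℝ) + 1 / 2) := by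
  rw [← Real.integral_rpow_mul_exp_neg_mul_Ioi (by positivity) hz]
  have : (k : ℝ) + 1 / 2 - 1 = (k : ℝ) - 1 / 2 := by ring
  rw [this]
  simp_rw [← neg_mul]
  refine norm_integral_le_of_norm_le (integrableOn_rpow_mul_exp_neg_mul ?_ hz) ?_
  · have : (0 : ℝ) ≤ k := by positivity
    linarith
  · filter_upwards [ae_restrict_mem measurableSet_Ioi] with u hu
    exact norm_hankelLaplace_integrand_le k le_rfl hu

/-- The fundamental theorem of calculus on `(a, ∞)` for a function with one-sided limit at `a`. -/
lemma integral_Ioi_of_hasDerivAt_of_tendsto_nhdsGT {f f' : ℝ → ℂ} {a : ℝ} {m₀ m : ℂ}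
    (hd : ∀ x ∈ Ioi a, HasDerivAt f (f' x) x) (hf' : IntegrableOn f' (Ioi a))
    (h₀ : Tendsto f (𝓝[>] a) (𝓝 m₀)) (h : Tendsto f atTop (𝓝 m)) :
    ∫ x in Ioi a, f' x = m - m₀ := by
  have hne : ∀ x ∈ Ioi a, Function.update f a m₀ =ᶠ[𝓝 x] f := fun x hx => by
    filter_upwards [isOpen_Ioi.mem_nhds hx] with y hy
    exact Function.update_of_ne (ne_of_gt hy) _ _
  have := integral_Ioi_of_hasDerivAt_of_tendsto (f := Function.update f a m₀) (a := a) (m := m) ?_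
    (fun x hx => (hd x hx).congr_of_eventuallyEq (hne x hx)) hf' ?_
  · simpa using this
  · rw [continuousWithinAt_update_same, Ici_sdiff_left]
    exact h₀
  · refine h.congr' ?_
    filter_upwards [eventually_gt_atTop a] with y hy
    exact (Function.update_of_ne (ne_of_gt hy) _ _).symm

/-- The differential equation satisfied by `hankelLaplace 0`. -/
lemma hankelLaplace_ode {z : ℂ} (hz : 0 < z.re) :
    z * hankelLaplace 2 z + (2 * Complex.I * z + 1) * hankelLaplace 1 z
      + Complex.I * hankelLaplace 0 z = 0 := by
  have hd : ∀ u ∈ Ioi (0 : ℝ), HasDerivAt (fun u : ℝ => -(Complex.exp (-z * u) * hankelRoot u))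
      (z * ((-u : ℂ) ^ 2 * Complex.exp (-z * u) * (hankelRoot u)⁻¹)
        + (2 * Complex.I * z + 1) * ((-u : ℂ) ^ 1 * Complex.exp (-z * u) * (hankelRoot u)⁻¹)
        + Complex.I * ((-u : ℂ) ^ 0 * Complex.exp (-z * u) * (hankelRoot u)⁻¹)) u := by
    intro u hu
    have h1 : HasDerivAt (fun u : ℝ => Complex.exp (-z * u)) (Complex.exp (-z * u) * (-z * 1)) u :=
      (((hasDerivAt_id (u : ℂ)).const_mul (-z)).cexp).comp_ofReal
    convert! (h1.mul (hasDerivAt_hankelRoot hu)).neg using 1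
    have h0 := hankelRoot_ne_zero hu
    have h2 := hankelRoot_sq hu
    field_simp
    rw [h2]
    ring
  have i0 := (integrableOn_hankelLaplace_integrand 0 hz).const_mul Complex.I
  have i1 := (integrableOn_hankelLaplace_integrand 1 hz).const_mul (2 * Complex.I * z + 1)
  have i2 := (integrableOn_hankelLaplace_integrand 2 hz).const_mul z
  have hinf : Tendsto (fun u : ℝ => -(Complex.exp (-z * u) * hankelRoot u)) atTop (𝓝 0) := by
    have hlim : Tendsto (fun u : ℝ => (u + 2) * rexp (-z.re * u)) atTop (𝓝 0) := by
      have a1 := tendsto_rpow_mul_exp_neg_mul_atTop_nhds_zero 1 z.re hz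
      have a2 := (tendsto_rpow_mul_exp_neg_mul_atTop_nhds_zero 0 z.re hz).const_mul 2
      have := a1.add a2
      simp only [Real.rpow_one, Real.rpow_zero, one_mul, mul_zero, add_zero] at this
      refine this.congr fun u => by ring
    refine squeeze_zero_norm' ?_ hlim
    filter_upwards [eventually_gt_atTop 0] with u hu
    rw [norm_neg, norm_mul, mul_comm, Complex.norm_exp]
    have h3 : ‖hankelRoot u‖ ≤ u + 2 := by
      have := norm_hankelRoot_sq_le hu
      exact abs_le_of_sq_le_sq' (by nlinarith) (by linarith) |>.2
    have h4 : (-z * u).re = -z.re * u := by simp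
    rw [h4]
    gcongr
  have hzero : Tendsto (fun u : ℝ => -(Complex.exp (-z * u) * hankelRoot u)) (𝓝[>] 0) (𝓝 0) := by
    have : Continuous fun u : ℝ => Complex.exp (-z * u) := by fun_prop
    have := ((this.tendsto 0).mono_left nhdsWithin_le_nhds).mul tendsto_hankelRoot_zero
    simpa using this.neg
  have hmain := integral_Ioi_of_hasDerivAt_of_tendsto_nhdsGT hd ((i2.add i1).add i0) hzero hinf
  have i12 : IntegrableOn (fun u : ℝ => z * ((-u : ℂ) ^ 2 * Complex.exp (-z * u) * (hankelRoot u)⁻¹)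
      + (2 * Complex.I * z + 1) * ((-u : ℂ) ^ 1 * Complex.exp (-z * u) * (hankelRoot u)⁻¹))
      (Ioi 0) := i2.add i1
  rw [integral_add i12 i0, integral_add i2 i1, integral_const_mul, integral_const_mul,
    integral_const_mul, sub_zero] at hmain
  exact hmain

lemma tendsto_mul_hankelLaplace_one :
    Tendsto (fun r : ℝ => (r : ℂ) * hankelLaplace 1 r) (𝓝[>] 0) (𝓝 (-1)) := by
  have h1 : Tendsto (fun r : ℝ => ∫ t in Ioi (0 : ℝ),
      -(Complex.exp (-t) * (((r⁻¹ * t : ℝ) : ℂ) / hankelRoot (r⁻¹ * t)))) (𝓝[>] 0)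
      (𝓝 (∫ t in Ioi (0 : ℝ), -(Complex.exp (-t) * 1))) := by
    have hexp : IntegrableOn (fun u : ℝ => rexp (-u)) (Ioi 0) := by
      simpa using integrableOn_rpow_mul_exp_neg_mul (s := 0) (by norm_num) one_pos
    refine tendsto_integral_filter_of_dominated_convergence (fun u => rexp (-u)) ?_ ?_ hexp ?_
    · filter_upwards [self_mem_nhdsWithin] with r hr
      have hpos : ∀ t ∈ Ioi (0 : ℝ), 0 < r⁻¹ * t := fun t ht => mul_pos (inv_pos.2 hr) ht
      refine ContinuousOn.aestronglyMeasurable ?_ measurableSet_Ioi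
      refine ContinuousOn.neg (ContinuousOn.mul (by fun_prop) (ContinuousOn.div (by fun_prop) ?_ ?_))
      · exact continuousOn_hankelRoot.comp (by fun_prop) hpos
      · exact fun t ht => hankelRoot_ne_zero (hpos t ht)
    · filter_upwards [self_mem_nhdsWithin] with r hr
      filter_upwards [ae_restrict_mem measurableSet_Ioi] with t ht
      have hpos : 0 < r⁻¹ * t := mul_pos (inv_pos.2 hr) ht
      have h2 : ‖((r⁻¹ * t : ℝ) : ℂ) / hankelRoot (r⁻¹ * t)‖ ≤ 1 := by
        rw [norm_div, Complex.norm_real, Real.norm_of_nonneg hpos.le]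
        exact div_le_one_of_le₀ (le_norm_hankelRoot hpos) (norm_nonneg _)
      rw [norm_neg, norm_mul, Complex.norm_exp]
      simpa using mul_le_mul_of_nonneg_left h2 (Real.exp_nonneg (-t))
    · filter_upwards [ae_restrict_mem measurableSet_Ioi] with t ht
      have h2 : Tendsto (fun r : ℝ => r⁻¹ * t) (𝓝[>] 0) atTop :=
        tendsto_inv_nhdsGT_zero.atTop_mul_const ht
      exact ((tendsto_div_hankelRoot.comp h2).const_mul _).neg
  have h3 : ∫ t in Ioi (0 : ℝ), -(Complex.exp (-t) * 1) = -1 := by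
    have := integral_exp_neg_Ioi_zero
    rw [integral_neg]
    simp only [mul_one]
    have h4 : ∀ t : ℝ, Complex.exp (-t) = ((rexp (-t) : ℝ) : ℂ) := by intro t; push_cast; rfl
    simp_rw [h4]
    rw [integral_complex_ofReal, this]
    simp
  rw [h3] at h1
  refine h1.congr' ?_
  filter_upwards [self_mem_nhdsWithin] with r hr
  have hr' : (0 : ℝ) < r := hr
  have hrc : (r : ℂ) ≠ 0 := by exact_mod_cast hr'.ne'
  have := integral_comp_mul_left_Ioi (fun u : ℝ => -(Complex.exp (-(r * u : ℝ)) * ((u : ℂ) / hankelRoot u))) 0 (inv_pos.2 hr')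
  rw [mul_zero] at this
  rw [hankelLaplace, inv_inv] at *
  have h5 : ∀ t : ℝ, r * (r⁻¹ * t) = t := fun t => by field_simp
  simp_rw [h5] at this
  rw [this, Complex.real_smul]
  congr 1
  refine integral_congr_ae (Eventually.of_forall fun u => ?_)
  simp only [Complex.ofReal_mul]
  rw [neg_mul]
  ring

/-- A multiple of the Hankel function `H₀⁽¹⁾`, on the right half-plane. -/
def hankel (z : ℂ) : ℂ := Complex.exp (Complex.I * z) * hankelLaplace 0 z

/-- The derivative of `hankel`. -/
def hankelDeriv (z : ℂ) : ℂ :=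
  Complex.exp (Complex.I * z) * (Complex.I * hankelLaplace 0 z + hankelLaplace 1 z)

lemma hasDerivAt_cexp_I_mul (z : ℂ) :
    HasDerivAt (fun z => Complex.exp (Complex.I * z)) (Complex.exp (Complex.I * z) * Complex.I) z := by
  simpa using ((hasDerivAt_id z).const_mul Complex.I).cexp

lemma hasDerivAt_hankel {z : ℂ} (hz : 0 < z.re) : HasDerivAt hankel (hankelDeriv z) z := by
  convert! (hasDerivAt_cexp_I_mul z).mul (hasDerivAt_hankelLaplace 0 hz) using 1
  rw [hankelDeriv]
  ring

/-- The Bessel equation of order zero, in divergence form. -/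
lemma hasDerivAt_mul_hankelDeriv {z : ℂ} (hz : 0 < z.re) :
    HasDerivAt (fun z => z * hankelDeriv z) (-(z * hankel z)) z := by
  have h := (hasDerivAt_id z).mul ((hasDerivAt_cexp_I_mul z).mul
    (((hasDerivAt_hankelLaplace 0 hz).const_mul Complex.I).add (hasDerivAt_hankelLaplace 1 hz)))
  convert! h using 1
  simp only [hankel, id, Pi.add_apply, Pi.mul_apply]
  linear_combination (norm := skip) (-Complex.exp (Complex.I * z)) * hankelLaplace_ode hz
  ring_nf
  simp only [Complex.I_sq]
  ring

lemma differentiableOn_hankel : DifferentiableOn ℂ hankel {z | 0 < z.re} :=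
  fun _ hz => (hasDerivAt_hankel hz).differentiableAt.differentiableWithinAt

lemma norm_hankel_le {z : ℂ} (hz : 0 < z.re) : ‖hankel z‖ ≤ rexp (-z.im) * (√π / √z.re) := by
  have h := norm_hankelLaplace_le 0 hz
  rw [hankel, norm_mul, Complex.norm_exp]
  have h1 : (Complex.I * z).re = -z.im := by simp
  rw [h1]
  gcongr
  refine h.trans (le_of_eq ?_)
  simp only [CharP.cast_eq_zero, zero_add]
  rw [Real.Gamma_one_half_eq, ← Real.sqrt_eq_rpow, Real.sqrt_div zero_le_one, Real.sqrt_one]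
  ring

/-- The radiation condition for `hankel`. -/
lemma norm_hankelDeriv_sub_le {r : ℝ} (hr : 0 < r) :
    ‖hankelDeriv r - Complex.I * hankel r‖ ≤ √π / (r * √r) := by
  have h := norm_hankelLaplace_le 1 (z := r) (by simpa using hr)
  have h1 : hankelDeriv r - Complex.I * hankel r = Complex.exp (Complex.I * r) * hankelLaplace 1 r := by
    rw [hankelDeriv, hankel]; ring
  rw [h1, norm_mul, mul_comm Complex.I, Complex.norm_exp_ofReal_mul_I, one_mul]
  refine h.trans ?_
  have h2 : Real.Gamma (((1 : ℕ) : ℝ) + 1 / 2) = 1 / 2 * √π := by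
    rw [Nat.cast_one, add_comm, Real.Gamma_add_one (by norm_num), Real.Gamma_one_half_eq]
  rw [h2, Complex.ofReal_re, Real.rpow_add (by positivity), ← Real.sqrt_eq_rpow,
    Real.sqrt_div zero_le_one, Real.sqrt_one, Nat.cast_one, Real.rpow_one]
  have : 0 < √r := Real.sqrt_pos.2 hr
  have h3 : 0 ≤ √π := Real.sqrt_nonneg _
  rw [div_mul_div_comm, one_mul, div_mul_eq_mul_div, one_mul]
  gcongr
  linarith

lemma tendsto_mul_hankel_zero : Tendsto (fun r : ℝ => (r : ℂ) * hankel r) (𝓝[>] 0) (𝓝 0) := by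
  have h : Tendsto (fun r : ℝ => √r * √π) (𝓝[>] 0) (𝓝 0) := by
    have : Continuous fun r : ℝ => √r * √π := by fun_prop
    simpa using (this.tendsto 0).mono_left nhdsWithin_le_nhds
  refine squeeze_zero_norm' ?_ h
  filter_upwards [self_mem_nhdsWithin] with r hr
  have hr' : (0 : ℝ) < r := hr
  have h1 := norm_hankel_le (z := r) (by simpa using hr)
  simp only [Complex.ofReal_im, neg_zero, Real.exp_zero, one_mul, Complex.ofReal_re] at h1
  rw [norm_mul, Complex.norm_real, Real.norm_of_nonneg hr'.le]
  calc r * ‖hankel r‖ ≤ r * (√π / √r) := by gcongr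
    _ = √r * √π := by
      have : r = √r * √r := (Real.mul_self_sqrt hr'.le).symm
      nth_rewrite 1 [this]
      have := (Real.sqrt_pos.2 hr').ne'
      field_simp

lemma tendsto_mul_hankelDeriv_zero :
    Tendsto (fun r : ℝ => (r : ℂ) * hankelDeriv r) (𝓝[>] 0) (𝓝 (-1)) := by
  have h1 := tendsto_mul_hankel_zero.const_mul Complex.I
  have h2 : Tendsto (fun r : ℝ => Complex.exp (Complex.I * r)) (𝓝[>] 0) (𝓝 1) := by
    have : Continuous fun r : ℝ => Complex.exp (Complex.I * r) := by fun_prop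
    simpa using (this.tendsto 0).mono_left nhdsWithin_le_nhds
  have h3 := h1.add (h2.mul tendsto_mul_hankelLaplace_one)
  simp only [mul_zero, zero_add, one_mul] at h3
  refine h3.congr fun r => ?_
  rw [hankel, hankelDeriv]
  ring

/-- Differentiation under an interval integral with jointly continuous integrand. -/
lemma hasDerivAt_intervalIntegral_of_continuous {F F' : ℝ → ℝ → ℂ} {a b : ℝ}
    (hF : Continuous (Function.uncurry F)) (hF' : Continuous (Function.uncurry F'))
    (hd : ∀ r φ, HasDerivAt (fun r => F r φ) (F' r φ) r) (r : ℝ) :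
    HasDerivAt (fun r => ∫ φ in a..b, F r φ) (∫ φ in a..b, F' r φ) r := by
  obtain ⟨C, hC⟩ := ((isCompact_closedBall r 1).prod isCompact_uIcc).exists_bound_of_continuousOn
    (s := Metric.closedBall r 1 ×ˢ uIcc a b) hF'.continuousOn
  have hFr : ∀ r, Continuous (F r) := fun r => hF.comp (Continuous.prodMk_right r)
  have hFr' : ∀ r, Continuous (F' r) := fun r => hF'.comp (Continuous.prodMk_right r)
  refine (intervalIntegral.hasDerivAt_integral_of_dominated_loc_of_deriv_le
    (bound := fun _ => C) (Metric.closedBall_mem_nhds r one_pos)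
    (Eventually.of_forall fun r => (hFr r).aestronglyMeasurable)
    ((hFr r).intervalIntegrable _ _) (hFr' r).aestronglyMeasurable ?_
    intervalIntegrable_const ?_).2
  · refine Eventually.of_forall fun φ hφ s hs => hC (s, φ) ⟨hs, ?_⟩
    exact uIoc_subset_uIcc hφ
  · exact Eventually.of_forall fun φ _ s _ => hd s φ

/-- The unit vector in direction `φ`. -/
def unitDir (φ : ℝ) : ℂ := Complex.exp (φ * Complex.I)

@[fun_prop]
lemma continuous_unitDir : Continuous unitDir := by unfold unitDir; fun_prop

lemma norm_unitDir (φ : ℝ) : ‖unitDir φ‖ = 1 := Complex.norm_exp_ofReal_mul_I φ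

lemma hasDerivAt_unitDir (φ : ℝ) : HasDerivAt unitDir (Complex.I * unitDir φ) φ := by
  have := (((hasDerivAt_id (φ : ℂ)).mul_const Complex.I).cexp).comp_ofReal
  convert! this using 1
  simp [unitDir, mul_comm]

lemma unitDir_pi : unitDir π = unitDir (-π) := by
  simp [unitDir, Complex.exp_neg]

/-- The Laplacian on the complex plane. -/
def lapC (v : ℂ → ℂ) (z : ℂ) : ℂ :=
  fderiv ℝ (fderiv ℝ v) z 1 1 + fderiv ℝ (fderiv ℝ v) z Complex.I Complex.I

lemma bilin_add_bilin_rotate (B : ℂ →L[ℝ] ℂ →L[ℝ] ℂ) {e : ℂ} (he : ‖e‖ = 1) :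
    B e e + B (Complex.I * e) (Complex.I * e) = B 1 1 + B Complex.I Complex.I := by
  have h1 : e = e.re • (1 : ℂ) + e.im • Complex.I := by
    simp [Complex.re_add_im]
  have h2 : Complex.I * e = (-e.im) • (1 : ℂ) + e.re • Complex.I := by
    apply Complex.ext <;> simp
  have h3 : (e.re : ℂ) ^ 2 + (e.im : ℂ) ^ 2 = 1 := by
    have := Complex.sq_norm e
    rw [he, Complex.normSq_apply] at this
    exact_mod_cast (by linarith : e.re ^ 2 + e.im ^ 2 = 1)
  rw [h2]
  nth_rewrite 1 [h1]
  nth_rewrite 3 [h1]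
  simp only [map_add, map_smul, add_apply, smul_apply]
  simp only [Complex.real_smul]
  push_cast
  linear_combination (B 1 1 + B Complex.I Complex.I) * h3

/-- The integral of `v` over the directions of the circle of radius `r` about `x`. -/
def circleInt (v : ℂ → ℂ) (x : ℂ) (r : ℝ) : ℂ := ∫ φ in (-π)..π, v (x + r * unitDir φ)

/-- The integral of the radial derivative of `v` over the circle of radius `r` about `x`. -/
def circleIntDeriv (v : ℂ → ℂ) (x : ℂ) (r : ℝ) : ℂ :=
  ∫ φ in (-π)..π, fderiv ℝ v (x + r * unitDir φ) (unitDir φ)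

lemma hasDerivAt_radial (x : ℂ) (r φ : ℝ) :
    HasDerivAt (fun r : ℝ => x + r * unitDir φ) (unitDir φ) r := by
  have := ((hasDerivAt_id (r : ℂ)).mul_const (unitDir φ)).comp_ofReal.const_add x
  simpa using this

lemma hasDerivAt_angular (x : ℂ) (r φ : ℝ) :
    HasDerivAt (fun φ : ℝ => x + r * unitDir φ) (r * (Complex.I * unitDir φ)) φ :=
  ((hasDerivAt_unitDir φ).const_mul (r : ℂ)).const_add x

lemma hasDerivAt_circleInt {v : ℂ → ℂ} (hv : ContDiff ℝ 2 v) (x : ℂ) (r : ℝ) :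
    HasDerivAt (circleInt v x) (circleIntDeriv v x r) r := by
  have h1 : Continuous (fderiv ℝ v) := hv.continuous_fderiv (by norm_num)
  have h0 := hv.continuous
  refine hasDerivAt_intervalIntegral_of_continuous (F := fun r φ => v (x + r * unitDir φ))
    (F' := fun r φ => fderiv ℝ v (x + r * unitDir φ) (unitDir φ)) ?_ ?_ ?_ r
  · unfold Function.uncurry; fun_prop
  · unfold Function.uncurry; fun_prop
  · intro r φ
    exact ((hv.differentiable (by norm_num)) _).hasFDerivAt.comp_hasDerivAt r (hasDerivAt_radial x r φ)

lemma contDiff_fderiv_one {v : ℂ → ℂ} (hv : ContDiff ℝ 2 v) : ContDiff ℝ 1 (fderiv ℝ v) :=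
  hv.fderiv_right (by norm_num)

lemma hasDerivAt_circleIntDeriv {v : ℂ → ℂ} (hv : ContDiff ℝ 2 v) (x : ℂ) (r : ℝ) :
    HasDerivAt (circleIntDeriv v x)
      (∫ φ in (-π)..π, fderiv ℝ (fderiv ℝ v) (x + r * unitDir φ) (unitDir φ) (unitDir φ)) r := by
  have hc := contDiff_fderiv_one hv
  have h1 : Continuous (fderiv ℝ v) := hc.continuous
  have h2 : Continuous (fderiv ℝ (fderiv ℝ v)) := hc.continuous_fderiv one_ne_zero
  refine hasDerivAt_intervalIntegral_of_continuous
    (F := fun r φ => fderiv ℝ v (x + r * unitDir φ) (unitDir φ))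
    (F' := fun r φ => fderiv ℝ (fderiv ℝ v) (x + r * unitDir φ) (unitDir φ) (unitDir φ)) ?_ ?_ ?_ r
  · unfold Function.uncurry; fun_prop
  · unfold Function.uncurry; fun_prop
  · intro r φ
    have := ((hc.differentiable (by norm_num)) _).hasFDerivAt.comp_hasDerivAt r
      (hasDerivAt_radial x r φ)
    exact (this.clm_apply (hasDerivAt_const r (unitDir φ))).congr_deriv (by simp)

lemma mul_integral_fderiv_fderiv_rotate {v : ℂ → ℂ} (hv : ContDiff ℝ 2 v) (x : ℂ) (r : ℝ) :
    r * ∫ φ in (-π)..π, fderiv ℝ (fderiv ℝ v) (x + r * unitDir φ)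
      (Complex.I * unitDir φ) (Complex.I * unitDir φ) = circleIntDeriv v x r := by
  have hc := contDiff_fderiv_one hv
  have h1 : Continuous (fderiv ℝ v) := hc.continuous
  have h2 : Continuous (fderiv ℝ (fderiv ℝ v)) := hc.continuous_fderiv one_ne_zero
  have hd : ∀ φ : ℝ, HasDerivAt (fun φ : ℝ => fderiv ℝ v (x + r * unitDir φ) (Complex.I * unitDir φ))
      (r * fderiv ℝ (fderiv ℝ v) (x + r * unitDir φ) (Complex.I * unitDir φ) (Complex.I * unitDir φ)
        - fderiv ℝ v (x + r * unitDir φ) (unitDir φ)) φ := by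
    intro φ
    have h3 := ((hc.differentiable (by norm_num)) _).hasFDerivAt.comp_hasDerivAt φ
      (hasDerivAt_angular x r φ)
    refine (h3.clm_apply ((hasDerivAt_unitDir φ).const_mul Complex.I)).congr_deriv ?_
    have h4 : (r : ℂ) * (Complex.I * unitDir φ) = r • (Complex.I * unitDir φ) := by simp
    have h5 : Complex.I * (Complex.I * unitDir φ) = - unitDir φ := by
      rw [← mul_assoc, Complex.I_mul_I, neg_one_mul]
    rw [h5]
    rw [h4, map_smul, smul_apply, Complex.real_smul, map_neg, sub_eq_add_neg]
    rfl
  have c1 : Continuous fun φ : ℝ => (r : ℂ) * fderiv ℝ (fderiv ℝ v) (x + r * unitDir φ)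
    (Complex.I * unitDir φ) (Complex.I * unitDir φ) := by fun_prop
  have c2 : Continuous fun φ : ℝ => fderiv ℝ v (x + r * unitDir φ) (unitDir φ) := by fun_prop
  have := intervalIntegral.integral_eq_sub_of_hasDerivAt (a := -π) (b := π) (fun φ _ => hd φ)
    ((c1.sub c2).intervalIntegrable _ _)
  rw [intervalIntegral.integral_sub (c1.intervalIntegrable _ _) (c2.intervalIntegrable _ _),
    unitDir_pi, sub_self, intervalIntegral.integral_const_mul, sub_eq_zero] at this
  exact this

lemma continuous_lapC {v : ℂ → ℂ} (hv : ContDiff ℝ 2 v) : Continuous (lapC v) := by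
  have hc := contDiff_fderiv_one hv
  have h2 : Continuous (fderiv ℝ (fderiv ℝ v)) := hc.continuous_fderiv one_ne_zero
  unfold lapC
  fun_prop

/-- The radial part of the Laplacian acts on circular means. -/
lemma hasDerivAt_mul_circleIntDeriv {v : ℂ → ℂ} (hv : ContDiff ℝ 2 v) (x : ℂ) (r : ℝ) :
    HasDerivAt (fun r : ℝ => r * circleIntDeriv v x r) (r * circleInt (lapC v) x r) r := by
  have h := (hasDerivAt_id (r : ℂ)).comp_ofReal.mul (hasDerivAt_circleIntDeriv hv x r)
  refine h.congr_deriv ?_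
  have hc := contDiff_fderiv_one hv
  have h2 : Continuous (fderiv ℝ (fderiv ℝ v)) := hc.continuous_fderiv one_ne_zero
  have c1 : Continuous fun φ : ℝ => fderiv ℝ (fderiv ℝ v) (x + r * unitDir φ)
    (Complex.I * unitDir φ) (Complex.I * unitDir φ) := by fun_prop
  have c2 : Continuous fun φ : ℝ => fderiv ℝ (fderiv ℝ v) (x + r * unitDir φ)
    (unitDir φ) (unitDir φ) := by fun_prop
  simp only [id, one_mul]
  rw [← mul_integral_fderiv_fderiv_rotate hv x r, ← mul_add, add_comm,
    ← intervalIntegral.integral_add (c2.intervalIntegrable _ _) (c1.intervalIntegrable _ _)]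
  congr 1
  unfold circleInt lapC
  congr 1
  ext φ
  exact bilin_add_bilin_rotate _ (norm_unitDir φ)

lemma circleInt_zero (v : ℂ → ℂ) (x : ℂ) : circleInt v x 0 = 2 * π * v x := by
  simp only [circleInt, Complex.ofReal_zero, zero_mul, add_zero, intervalIntegral.integral_const,
    Complex.real_smul]
  push_cast
  ring

lemma continuous_circleInt {f : ℂ → ℂ} (hf : Continuous f) (x : ℂ) :
    Continuous (circleInt f x) := by
  unfold circleInt
  refine intervalIntegral.continuous_parametric_intervalIntegral_of_continuous' ?_ _ _
  unfold Function.uncurry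
  fun_prop

lemma exists_forall_eq_zero_of_hasCompactSupport {f : ℂ → ℂ} (hs : HasCompactSupport f) (x : ℂ) :
    ∃ B : ℝ, 0 < B ∧ ∀ y, B < ‖y - x‖ → f y = 0 := by
  obtain ⟨B, hB⟩ := hs.isCompact.isBounded.subset_closedBall x
  refine ⟨max B 1, by positivity, fun y hy => ?_⟩
  refine image_eq_zero_of_notMem_tsupport fun h => ?_
  have := hB h
  rw [Metric.mem_closedBall, dist_eq_norm] at this
  linarith [le_max_left B 1]

lemma norm_radial_sub (x : ℂ) {r : ℝ} (hr : 0 ≤ r) (φ : ℝ) : ‖x + r * unitDir φ - x‖ = r := by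
  rw [add_sub_cancel_left, norm_mul, norm_unitDir, mul_one, Complex.norm_real,
    Real.norm_of_nonneg hr]

lemma integrableOn_mul_circleInt {f : ℂ → ℂ} (hf : Continuous f) (hs : HasCompactSupport f) (x : ℂ) :
    IntegrableOn (fun r : ℝ => (r : ℂ) * circleInt f x r) (Ioi 0) := by
  obtain ⟨B, hB0, hB⟩ := exists_forall_eq_zero_of_hasCompactSupport hs x
  have hc : Continuous fun r : ℝ => (r : ℂ) * circleInt f x r := by
    have := continuous_circleInt hf x
    fun_prop
  rw [← Ioc_union_Ioi_eq_Ioi hB0.le]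
  refine ((hc.integrableOn_Icc (a := 0) (b := B)).mono_set Ioc_subset_Icc_self).union ?_
  refine (integrableOn_zero (ε' := ℂ)).congr_fun (fun r hr => ?_) measurableSet_Ioi
  have hr' : 0 ≤ r := hB0.le.trans (le_of_lt hr)
  have : ∀ φ, f (x + r * unitDir φ) = 0 := fun φ => hB _ (by rwa [norm_radial_sub x hr'])
  simp [circleInt, this]

/-- Integration in polar coordinates about `x`. -/
lemma integral_eq_integral_circleInt {f : ℂ → ℂ} (hf : Continuous f) (hs : HasCompactSupport f)
    (x : ℂ) : ∫ y, f y = ∫ r in Ioi (0 : ℝ), (r : ℂ) * circleInt f x r := by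
  obtain ⟨B, hB0, hB⟩ := exists_forall_eq_zero_of_hasCompactSupport hs x
  have hpol : ∀ p : ℝ × ℝ, Complex.polarCoord.symm p = p.1 * unitDir p.2 := fun p => by
    rw [Complex.polarCoord_symm_apply, unitDir, Complex.exp_mul_I, Complex.ofReal_cos,
      Complex.ofReal_sin]
  have h1 : ∫ y, f y = ∫ y, f (x + y) := (integral_add_left_eq_self f x).symm
  rw [h1, ← Complex.integral_comp_polarCoord_symm]
  simp only [hpol, polarCoord_target, Complex.real_smul]
  have hc : Continuous fun p : ℝ × ℝ => (p.1 : ℂ) * f (x + p.1 * unitDir p.2) := by fun_prop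
  have hint : IntegrableOn (fun p : ℝ × ℝ => (p.1 : ℂ) * f (x + p.1 * unitDir p.2))
      (Ioi 0 ×ˢ Ioo (-π) π) := by
    rw [← Ioc_union_Ioi_eq_Ioi hB0.le, union_prod]
    refine IntegrableOn.union ?_ ?_
    · refine (hc.continuousOn.integrableOn_compact
        (isCompact_Icc (a := (0 : ℝ)) (b := B) |>.prod (isCompact_Icc (a := -π) (b := π)))).mono_set ?_
      exact prod_mono Ioc_subset_Icc_self Ioo_subset_Icc_self
    · refine (integrableOn_zero (ε' := ℂ)).congr_fun (fun p hp => ?_)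
        (measurableSet_Ioi.prod measurableSet_Ioo)
      have hr : B < p.1 := hp.1
      rw [hB _ (by rwa [norm_radial_sub x (hB0.le.trans hr.le)]), mul_zero]
  rw [Measure.volume_eq_prod] at hint ⊢
  rw [setIntegral_prod _ hint]
  refine setIntegral_congr_fun measurableSet_Ioi fun r _ => ?_
  simp only
  rw [integral_const_mul, circleInt, intervalIntegral.integral_of_le (by linarith [pi_pos]),
    integral_Ioc_eq_integral_Ioo]

/-- Green representation formula, obtained by integrating the Wronskian of the circular means
of `v` about `x` and of a radial function with a logarithmic singularity. -/
theorem integral_eq_of_radial_fundamental {v : ℂ → ℂ} (hv : ContDiff ℝ 2 v) (x : ℂ)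
    {E E' k : ℝ → ℂ} (hE : ∀ r > 0, HasDerivAt E (E' r) r)
    (hE' : ∀ r > 0, HasDerivAt (fun r : ℝ => r * E' r) (r * (k r - E r)) r)
    (hE0 : Tendsto (fun r : ℝ => r * E r) (𝓝[>] 0) (𝓝 0))
    (hE0' : Tendsto (fun r : ℝ => r * E' r) (𝓝[>] 0) (𝓝 (-1)))
    (hinf : Tendsto (fun r : ℝ => r * (circleIntDeriv v x r * E r - circleInt v x r * E' r))
      atTop (𝓝 0))
    {f : ℂ → ℂ} (hfc : Continuous f) (hfs : HasCompactSupport f)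
    (hf : ∀ y ≠ x, f y = E ‖y - x‖ * (lapC v y + v y) - v y * k ‖y - x‖) :
    ∫ y, f y = -(2 * π * v x) := by
  rw [integral_eq_integral_circleInt hfc hfs x]
  have hd : ∀ r ∈ Ioi (0 : ℝ), HasDerivAt
      (fun r : ℝ => r * (circleIntDeriv v x r * E r - circleInt v x r * E' r))
      ((r : ℂ) * circleInt f x r) r := by
    intro r hr
    have hr0 : (0 : ℝ) < r := hr
    have h1 := ((hasDerivAt_mul_circleIntDeriv hv x r).mul (hE r hr)).sub
      ((hasDerivAt_circleInt hv x r).mul (hE' r hr))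
    have h2 : circleInt f x r
        = E r * (circleInt (lapC v) x r + circleInt v x r) - circleInt v x r * k r := by
      have c1 : Continuous fun φ : ℝ => lapC v (x + r * unitDir φ) := by
        have := continuous_lapC hv
        fun_prop
      have c2 : Continuous fun φ : ℝ => v (x + r * unitDir φ) := by
        have := hv.continuous
        fun_prop
      have c3 : Continuous fun φ : ℝ =>
        E r * (lapC v (x + r * unitDir φ) + v (x + r * unitDir φ)) := by fun_prop
      unfold circleInt
      rw [← intervalIntegral.integral_add (c1.intervalIntegrable _ _) (c2.intervalIntegrable _ _),
        ← intervalIntegral.integral_const_mul, ← intervalIntegral.integral_mul_const,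
        ← intervalIntegral.integral_sub (c3.intervalIntegrable _ _)
          ((c2.mul_const _).intervalIntegrable _ _)]
      congr 1
      ext φ
      have h3 := norm_radial_sub x hr0.le φ
      rw [hf _ (fun h => by rw [h, sub_self, norm_zero] at h3; exact hr0.ne h3), h3]
    refine (h1.congr_of_eventuallyEq (Eventually.of_forall fun r => ?_)).congr_deriv ?_
    · simp only [Pi.sub_apply, Pi.mul_apply]
      ring
    · rw [h2]
      ring
  have h0 : Tendsto (fun r : ℝ => r * (circleIntDeriv v x r * E r - circleInt v x r * E' r))
      (𝓝[>] 0) (𝓝 (2 * π * v x)) := by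
    have t1 := ((hasDerivAt_circleIntDeriv hv x 0).continuousAt.tendsto.mono_left
      (nhdsWithin_le_nhds (s := Ioi 0))).mul hE0
    have t2 := ((hasDerivAt_circleInt hv x 0).continuousAt.tendsto.mono_left
      (nhdsWithin_le_nhds (s := Ioi 0))).mul hE0'
    have t3 := t1.sub t2
    rw [circleInt_zero] at t3
    simp only [mul_zero, mul_neg, mul_one, sub_neg_eq_add, zero_add] at t3
    refine t3.congr fun r => by ring
  rw [integral_Ioi_of_hasDerivAt_of_tendsto_nhdsGT hd (integrableOn_mul_circleInt hfc hfs x) h0 hinf,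
    zero_sub]

/-- A smooth radial cutoff, equal to one on `[0, 1/2]` and to zero on `[3/4, ∞)`. -/
def radialCutoff (r : ℝ) : ℝ := Real.smoothTransition (3 - 4 * r)

lemma contDiff_radialCutoff (n : ℕ∞) : ContDiff ℝ n radialCutoff :=
  Real.smoothTransition.contDiff.comp (by fun_prop)

lemma radialCutoff_of_le {r : ℝ} (hr : r ≤ 1 / 2) : radialCutoff r = 1 :=
  Real.smoothTransition.one_of_one_le (by linarith)

lemma radialCutoff_of_ge {r : ℝ} (hr : 3 / 4 ≤ r) : radialCutoff r = 0 :=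
  Real.smoothTransition.zero_of_nonpos (by linarith)

lemma deriv_radialCutoff_eventuallyEq {r : ℝ} (hr : r < 1 / 2 ∨ 3 / 4 < r) :
    deriv radialCutoff =ᶠ[𝓝 r] fun _ => 0 := by
  obtain ⟨c, hc⟩ : ∃ c, radialCutoff =ᶠ[𝓝 r] fun _ => c := by
    rcases hr with hr | hr
    · refine ⟨1, ?_⟩
      filter_upwards [Iio_mem_nhds hr] with s hs
      exact radialCutoff_of_le (le_of_lt hs)
    · refine ⟨0, ?_⟩
      filter_upwards [Ioi_mem_nhds hr] with s hs
      exact radialCutoff_of_ge (le_of_lt hs)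
  refine hc.deriv.trans ?_
  simp

lemma contDiff_deriv_radialCutoff (n : ℕ) : ContDiff ℝ n (deriv radialCutoff) :=
  (contDiff_succ_iff_deriv.1 (contDiff_radialCutoff (n + 1 : ℕ))).2.2

lemma contDiff_deriv_deriv_radialCutoff (n : ℕ) : ContDiff ℝ n (deriv (deriv radialCutoff)) :=
  (contDiff_succ_iff_deriv.1 (contDiff_deriv_radialCutoff (n + 1))).2.2

/-- The radial profile of the reproducing kernel of the Helmholtz equation. -/
def kernelProfile (r : ℝ) : ℂ :=
  (deriv (deriv radialCutoff) r : ℝ) * hankel r + 2 * (deriv radialCutoff r : ℝ) * hankelDeriv r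
    + (deriv radialCutoff r : ℝ) * hankel r / r

lemma kernelProfile_eq_zero {r : ℝ} (hr : r < 1 / 2 ∨ 3 / 4 < r) : kernelProfile r = 0 := by
  have h1 := deriv_radialCutoff_eventuallyEq hr
  have h2 : deriv (deriv radialCutoff) r = 0 := by
    rw [h1.deriv_eq]
    simp
  simp [kernelProfile, h1.eq_of_nhds, h2]

lemma contDiffAt_comp_ofReal {f : ℂ → ℂ} (hf : DifferentiableOn ℂ f {z | 0 < z.re}) {r : ℝ}
    (hr : 0 < r) {n : WithTop ℕ∞} : ContDiffAt ℝ n (fun r : ℝ => f r) r := by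
  have h1 : AnalyticAt ℂ f r :=
    hf.analyticAt ((isOpen_lt continuous_const Complex.continuous_re).mem_nhds (by simpa using hr))
  have h2 : ContDiffAt ℝ n f r := (h1.restrictScalars (𝕜 := ℝ)).contDiffAt
  exact h2.comp r Complex.ofRealCLM.contDiff.contDiffAt

lemma differentiableOn_hankelDeriv : DifferentiableOn ℂ hankelDeriv {z | 0 < z.re} := by
  intro z hz
  have h := (hasDerivAt_cexp_I_mul z).mul
    (((hasDerivAt_hankelLaplace 0 hz).const_mul Complex.I).add (hasDerivAt_hankelLaplace 1 hz))
  exact h.differentiableAt.differentiableWithinAt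

/-- The reproducing kernel of the Helmholtz equation. -/
def helmholtzKernel (y : ℂ) : ℂ := kernelProfile ‖y‖

lemma helmholtzKernel_eq_zero {y : ℂ} (hy : 1 ≤ ‖y‖) : helmholtzKernel y = 0 :=
  kernelProfile_eq_zero (Or.inr (by linarith))

lemma contDiff_helmholtzKernel : ContDiff ℝ 1 helmholtzKernel := by
  rw [contDiff_iff_contDiffAt]
  intro y
  rcases lt_or_ge ‖y‖ (1 / 2) with hy | hy
  · have : helmholtzKernel =ᶠ[𝓝 y] fun _ => 0 := by
      filter_upwards [(isOpen_lt continuous_norm continuous_const).mem_nhds hy] with z hz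
      exact kernelProfile_eq_zero (Or.inl hz)
    exact contDiffAt_const.congr_of_eventuallyEq this
  · have hpos : 0 < ‖y‖ := by linarith
    have hy0 : y ≠ 0 := norm_pos_iff.1 hpos
    have c1 : ContDiff ℝ 1 fun r : ℝ => ((deriv radialCutoff r : ℝ) : ℂ) :=
      Complex.ofRealCLM.contDiff.comp (contDiff_deriv_radialCutoff 1)
    have c2 : ContDiff ℝ 1 fun r : ℝ => ((deriv (deriv radialCutoff) r : ℝ) : ℂ) :=
      Complex.ofRealCLM.contDiff.comp (contDiff_deriv_deriv_radialCutoff 1)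
    have c3 : ContDiffAt ℝ 1 (fun r : ℝ => hankel r) ‖y‖ :=
      contDiffAt_comp_ofReal differentiableOn_hankel hpos
    have c4 : ContDiffAt ℝ 1 (fun r : ℝ => hankelDeriv r) ‖y‖ :=
      contDiffAt_comp_ofReal differentiableOn_hankelDeriv hpos
    have c5 : ContDiffAt ℝ 1 (fun r : ℝ => (r : ℂ)) ‖y‖ := Complex.ofRealCLM.contDiff.contDiffAt
    have c6 : ContDiffAt ℝ 1 kernelProfile ‖y‖ := by
      unfold kernelProfile
      simp only [div_eq_mul_inv]
      refine ((c2.contDiffAt.mul c3).add ((contDiffAt_const.mul c1.contDiffAt).mul c4)).add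
        ((c1.contDiffAt.mul c3).mul (c5.inv ?_))
      exact_mod_cast hpos.ne'
    exact c6.comp y (contDiffAt_norm ℝ hy0)

lemma hasCompactSupport_helmholtzKernel : HasCompactSupport helmholtzKernel := by
  refine HasCompactSupport.intro (isCompact_closedBall (0 : ℂ) 1) fun y hy => ?_
  rw [Metric.mem_closedBall, dist_zero_right, not_le] at hy
  exact helmholtzKernel_eq_zero hy.le

/-- Solutions of the Helmholtz equation are reproduced by `helmholtzKernel`. -/
lemma integral_mul_helmholtzKernel {v : ℂ → ℂ} (hv : ContDiff ℝ 2 v) {x : ℂ}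
    (hx : ∀ y ∈ Metric.ball x 1, lapC v y + v y = 0) :
    ∫ y, v y * helmholtzKernel (y - x) = 2 * π * v x := by
  have hχ : ∀ r, HasDerivAt (fun r => ((radialCutoff r : ℝ) : ℂ)) (deriv radialCutoff r : ℝ) r :=
    fun r => (((contDiff_radialCutoff 1).differentiable (by norm_num)) r).hasDerivAt.ofReal_comp
  have hχ' : ∀ r, HasDerivAt (fun r => ((deriv radialCutoff r : ℝ) : ℂ))
      (deriv (deriv radialCutoff) r : ℝ) r :=
    fun r => (((contDiff_deriv_radialCutoff 1).differentiable (by norm_num)) r).hasDerivAt.ofReal_comp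
  have hh : ∀ r > (0 : ℝ), HasDerivAt (fun r : ℝ => hankel r) (hankelDeriv r) r :=
    fun r hr => (hasDerivAt_hankel (z := r) (by simpa using hr)).comp_ofReal
  have hh' : ∀ r > (0 : ℝ), HasDerivAt (fun r : ℝ => (r : ℂ) * hankelDeriv r) (-(r * hankel r)) r :=
    fun r hr => (hasDerivAt_mul_hankelDeriv (z := r) (by simpa using hr)).comp_ofReal
  have hid : ∀ r : ℝ, HasDerivAt (fun r : ℝ => (r : ℂ)) 1 r :=
    fun r => (hasDerivAt_id (r : ℂ)).comp_ofReal
  have hev : ∀ᶠ r : ℝ in 𝓝[>] 0, radialCutoff r = 1 ∧ deriv radialCutoff r = 0 := by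
    filter_upwards [nhdsWithin_le_nhds (Iio_mem_nhds (by norm_num : (0 : ℝ) < 1 / 2))] with r hr
    exact ⟨radialCutoff_of_le (le_of_lt hr), (deriv_radialCutoff_eventuallyEq (Or.inl hr)).eq_of_nhds⟩
  have hK := contDiff_helmholtzKernel.continuous
  have hvc := hv.continuous
  have main := integral_eq_of_radial_fundamental hv x
    (E := fun r => radialCutoff r * hankel r)
    (E' := fun r => (deriv radialCutoff r : ℝ) * hankel r + radialCutoff r * hankelDeriv r)
    (k := kernelProfile) (f := fun y => -(v y * helmholtzKernel (y - x))) ?_ ?_ ?_ ?_ ?_ ?_ ?_ ?_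
  · rw [integral_neg, neg_inj] at main
    exact main
  · intro r hr
    exact (hχ r).mul (hh r hr)
  · intro r hr
    have h1 := ((hid r).mul ((hχ' r).mul (hh r hr))).add ((hχ r).mul (hh' r hr))
    refine (h1.congr_of_eventuallyEq (Eventually.of_forall fun s => ?_)).congr_deriv ?_
    · simp only [Pi.add_apply, Pi.mul_apply]
      ring
    · have hr' : (r : ℂ) ≠ 0 := by exact_mod_cast (ne_of_gt hr)
      simp only [kernelProfile, Pi.mul_apply]
      field_simp
      ring
  · refine tendsto_mul_hankel_zero.congr' ?_
    filter_upwards [hev] with r hr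
    simp [hr.1]
  · refine tendsto_mul_hankelDeriv_zero.congr' ?_
    filter_upwards [hev] with r hr
    simp [hr.1, hr.2]
  · refine tendsto_const_nhds.congr' ?_
    filter_upwards [eventually_gt_atTop 1] with r hr
    have h1 := radialCutoff_of_ge (r := r) (by linarith)
    have h2 := (deriv_radialCutoff_eventuallyEq (r := r) (Or.inr (by linarith))).eq_of_nhds
    simp [h1, h2]
  · fun_prop
  · refine HasCompactSupport.intro (isCompact_closedBall x 1) fun y hy => ?_
    rw [Metric.mem_closedBall, dist_eq_norm, not_le] at hy
    simp [helmholtzKernel_eq_zero hy.le]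
  · intro y _
    rcases lt_or_ge ‖y - x‖ 1 with h | h
    · rw [hx y (by rwa [Metric.mem_ball, dist_eq_norm])]
      simp [helmholtzKernel]
    · rw [radialCutoff_of_ge (r := ‖y - x‖) (by linarith)]
      simp [helmholtzKernel]

/-- Interior gradient estimate for the Helmholtz equation. -/
lemma exists_norm_fderiv_le {v : ℂ → ℂ} (hv : ContDiff ℝ 2 v) : ∃ C : ℝ, 0 ≤ C ∧ ∀ (x : ℂ) (M : ℝ),
    (∀ y ∈ Metric.closedBall x 2, lapC v y + v y = 0) →
    (∀ y ∈ Metric.closedBall x 2, ‖v y‖ ≤ M) → ‖fderiv ℝ v x‖ ≤ C * M := by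
  obtain ⟨C, hC⟩ := contDiff_helmholtzKernel.lipschitzWith_of_hasCompactSupport
    hasCompactSupport_helmholtzKernel one_ne_zero
  set A : ℝ := volume.real (Metric.closedBall (0 : ℂ) 2) with hA
  have hA0 : 0 ≤ A := measureReal_nonneg
  refine ⟨C * A, by positivity, fun x M hx hM => ?_⟩
  have hM0 : 0 ≤ M := (norm_nonneg _).trans (hM x (Metric.mem_closedBall_self zero_le_two))
  have hK := contDiff_helmholtzKernel.continuous
  have hvc := hv.continuous
  refine norm_fderiv_le_of_lip' ℝ (by positivity) ?_
  filter_upwards [Metric.ball_mem_nhds x one_pos] with z hz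
  have hz' : ‖z - x‖ < 1 := by rwa [Metric.mem_ball, dist_eq_norm] at hz
  have hint : ∀ w : ℂ, Integrable fun y => v y * helmholtzKernel (y - w) := fun w => by
    refine Continuous.integrable_of_hasCompactSupport (by fun_prop) ?_
    refine HasCompactSupport.intro (isCompact_closedBall w 1) fun y hy => ?_
    rw [Metric.mem_closedBall, dist_eq_norm, not_le] at hy
    simp [helmholtzKernel_eq_zero hy.le]
  have e1 := integral_mul_helmholtzKernel hv (x := z) fun y hy => hx y <| by
    rw [Metric.mem_ball] at hy hz
    rw [Metric.mem_closedBall]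
    linarith [dist_triangle y z x]
  have e2 := integral_mul_helmholtzKernel hv (x := x) fun y hy => hx y <| by
    rw [Metric.mem_ball] at hy
    rw [Metric.mem_closedBall]
    linarith
  have e3 : 2 * π * (v z - v x) = ∫ y in Metric.closedBall x 2,
      v y * (helmholtzKernel (y - z) - helmholtzKernel (y - x)) := by
    rw [mul_sub, ← e1, ← e2, ← integral_sub (hint z) (hint x),
      setIntegral_eq_integral_of_forall_compl_eq_zero]
    · simp_rw [mul_sub]
    · intro y hy
      rw [Metric.mem_closedBall, not_le, dist_eq_norm] at hy
      have h1 : ‖y - x‖ ≤ ‖y - z‖ + ‖z - x‖ := norm_sub_le_norm_sub_add_norm_sub y z x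
      rw [helmholtzKernel_eq_zero (by linarith), helmholtzKernel_eq_zero (by linarith)]
      simp
  have e4 : ‖∫ y in Metric.closedBall x 2, v y * (helmholtzKernel (y - z) - helmholtzKernel (y - x))‖
      ≤ M * (C * ‖z - x‖) * volume.real (Metric.closedBall x 2) := by
    refine norm_setIntegral_le_of_norm_le_const measure_closedBall_lt_top fun y hy => ?_
    rw [norm_mul]
    have h1 := hC.norm_sub_le (y - z) (y - x)
    rw [sub_sub_sub_cancel_left, norm_sub_rev x z] at h1
    have := hM y hy
    gcongr
  have e5 : volume.real (Metric.closedBall x 2) = A := by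
    rw [hA, Measure.real, Measure.real, Measure.addHaar_closedBall_center]
  rw [← e3, e5, norm_mul] at e4
  have e6 : (1 : ℝ) ≤ ‖(2 * π : ℂ)‖ := by
    simp [abs_of_pos pi_pos]
    linarith [pi_gt_three]
  calc ‖v z - v x‖ ≤ ‖(2 * π : ℂ)‖ * ‖v z - v x‖ := le_mul_of_one_le_left (norm_nonneg _) e6
    _ ≤ M * (C * ‖z - x‖) * A := e4
    _ = C * A * M * ‖z - x‖ := by ring

/-- The Sommerfeld radiation condition with unit wave number, for the radial variable about `p`. -/
def IsOutgoing (v : ℂ → ℂ) (p : ℂ) : Prop :=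
  ∀ ε > 0, ∃ R > 0, ∀ y, R ≤ ‖y - p‖ →
    √‖y - p‖ * ‖fderiv ℝ v y (‖y - p‖⁻¹ • (y - p)) - Complex.I * v y‖ ≤ ε

lemma IsOutgoing.norm_le {v : ℂ → ℂ} {p : ℂ} (h : IsOutgoing v p) (hv : ContDiff ℝ 2 v) {ε : ℝ}
    (hε : 0 < ε) : ∃ R > 0, ∀ y, R ≤ ‖y - p‖ → ‖v y‖ ≤ ε * √‖y - p‖ := by
  set δ := ε / 3 with hδ
  have hδ0 : 0 < δ := by positivity
  obtain ⟨R, hR, hS⟩ := h δ hδ0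
  obtain ⟨M, hM⟩ := (isCompact_closedBall p R).exists_bound_of_continuousOn hv.continuous.continuousOn
  have hM0 : 0 ≤ M := (norm_nonneg _).trans (hM p (Metric.mem_closedBall_self hR.le))
  refine ⟨max R ((M / δ) ^ 2), by positivity, fun y hy => ?_⟩
  have hyR : R ≤ ‖y - p‖ := (le_max_left _ _).trans hy
  have hyM : M ≤ δ * √‖y - p‖ := by
    have := Real.sqrt_le_sqrt ((le_max_right _ _).trans hy)
    rw [Real.sqrt_sq (by positivity), div_le_iff₀ hδ0] at this
    linarith
  have hy0 : 0 < ‖y - p‖ := hR.trans_le hyR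
  set ω : ℂ := ‖y - p‖⁻¹ • (y - p) with hω
  have hω1 : ‖ω‖ = 1 := by
    rw [hω, norm_smul, norm_inv, norm_norm, inv_mul_cancel₀ hy0.ne']
  have hnorm : ∀ t : ℝ, 0 ≤ t → ‖p + t * ω - p‖ = t := fun t ht => by
    rw [add_sub_cancel_left, norm_mul, hω1, mul_one, Complex.norm_real, Real.norm_of_nonneg ht]
  have hd : ∀ t : ℝ, HasDerivAt
      (fun t : ℝ => Complex.exp (-(Complex.I * t)) * v (p + t * ω))
      (Complex.exp (-(Complex.I * t)) *
        (fderiv ℝ v (p + t * ω) ω - Complex.I * v (p + t * ω))) t := fun t => by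
    have h1 : HasDerivAt (fun t : ℝ => p + t * ω) ω t := by
      have := ((hasDerivAt_id (t : ℂ)).mul_const ω).comp_ofReal.const_add p
      simpa using this
    have h2 := ((hv.differentiable (by norm_num)) _).hasFDerivAt.comp_hasDerivAt t h1
    have h3 : HasDerivAt (fun t : ℝ => Complex.exp (-(Complex.I * t)))
        (Complex.exp (-(Complex.I * t)) * -(Complex.I * 1)) t :=
      ((hasDerivAt_id (t : ℂ)).const_mul Complex.I).neg.cexp.comp_ofReal
    refine (h3.mul h2).congr_deriv ?_
    simp only [Function.comp_apply]
    ring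
  have hexp : ∀ t : ℝ, ‖Complex.exp (-(Complex.I * t))‖ = 1 := fun t => by
    rw [Complex.norm_exp]
    simp
  have hB : ∀ t ∈ Icc R ‖y - p‖, ‖Complex.exp (-(Complex.I * t)) * v (p + t * ω)‖
      ≤ M + 2 * δ * √t := by
    refine image_norm_le_of_norm_deriv_right_le_deriv_boundary'
      (f' := fun t => Complex.exp (-(Complex.I * t)) *
        (fderiv ℝ v (p + t * ω) ω - Complex.I * v (p + t * ω)))
      (B := fun t => M + 2 * δ * √t) (B' := fun t => 2 * δ * (1 / (2 * √t)))
      (fun t _ => (hd t).continuousAt.continuousWithinAt)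
      (fun t _ => (hd t).hasDerivWithinAt) ?_ (by fun_prop) ?_ ?_
    · rw [norm_mul, hexp, one_mul]
      have := hM (p + R * ω) (by rw [Metric.mem_closedBall, dist_eq_norm, hnorm R hR.le])
      have : 0 ≤ 2 * δ * √R := by positivity
      linarith
    · intro t ht
      exact (((hasDerivAt_sqrt (hR.trans_le ht.1).ne').const_mul (2 * δ)).const_add M).hasDerivWithinAt
    · intro t ht
      have ht0 : 0 < t := hR.trans_le ht.1
      have hs := hS (p + t * ω) (by rw [hnorm t ht0.le]; exact ht.1)
      rw [hnorm t ht0.le, add_sub_cancel_left] at hs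
      have e : t⁻¹ • ((t : ℂ) * ω) = ω := by
        rw [← Complex.real_smul, smul_smul, inv_mul_cancel₀ ht0.ne', one_smul]
      rw [e] at hs
      have hst : 0 < √t := Real.sqrt_pos.2 ht0
      rw [norm_mul, hexp, one_mul]
      calc _ ≤ δ / √t := by rw [le_div_iff₀ hst]; linarith
        _ = _ := by field_simp
  have hfin := hB ‖y - p‖ ⟨hyR, le_rfl⟩
  have e : p + (‖y - p‖ : ℂ) * ω = y := by
    rw [hω, ← Complex.real_smul, smul_smul, mul_inv_cancel₀ hy0.ne', one_smul, add_sub_cancel]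
  rw [norm_mul, hexp, one_mul, e] at hfin
  have : ε = 3 * δ := by rw [hδ]; ring
  rw [this]
  linarith

lemma IsOutgoing.norm_fderiv_le {v : ℂ → ℂ} {p : ℂ} (h : IsOutgoing v p) (hv : ContDiff ℝ 2 v)
    (hg : HasCompactSupport fun y => lapC v y + v y) {ε : ℝ} (hε : 0 < ε) :
    ∃ R > 0, ∀ y, R ≤ ‖y - p‖ → ‖fderiv ℝ v y‖ ≤ ε * √‖y - p‖ := by
  obtain ⟨C, hC0, hC⟩ := exists_norm_fderiv_le hv
  obtain ⟨B, hB0, hB⟩ := exists_forall_eq_zero_of_hasCompactSupport hg p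
  obtain ⟨R, hR, hgr⟩ := h.norm_le hv (ε := ε / (2 * (C + 1))) (by positivity)
  refine ⟨max R B + 3, by positivity, fun y hy => ?_⟩
  have hz : ∀ z ∈ Metric.closedBall y 2, max R B + 1 ≤ ‖z - p‖ ∧ ‖z - p‖ ≤ 2 ^ 2 * ‖y - p‖ := by
    intro z hz
    rw [Metric.mem_closedBall, dist_eq_norm] at hz
    have h1 := norm_sub_le_norm_sub_add_norm_sub z y p
    have h2 := norm_sub_le_norm_sub_add_norm_sub y z p
    rw [norm_sub_rev y z] at h2
    have h3 : 0 < max R B := by positivity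
    constructor <;> linarith
  have h1 := hC y (ε / (2 * (C + 1)) * (2 * √‖y - p‖)) ?_ ?_
  · refine h1.trans ?_
    have : C * (ε / (2 * (C + 1)) * (2 * √‖y - p‖)) = C / (C + 1) * (ε * √‖y - p‖) := by
      field_simp
    rw [this]
    refine mul_le_of_le_one_left (by positivity) ?_
    rw [div_le_one (by positivity)]
    linarith
  · intro z hzy
    exact hB z (by linarith [(hz z hzy).1, le_max_right R B])
  · intro z hzy
    refine (hgr z (by linarith [(hz z hzy).1, le_max_left R B])).trans ?_
    gcongr
    refine (Real.sqrt_le_sqrt (hz z hzy).2).trans ?_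
    rw [Real.sqrt_mul (by positivity), Real.sqrt_sq zero_le_two]

lemma norm_normalize_sub_normalize_le {a b : ℂ} (ha : a ≠ 0) (hb : b ≠ 0) :
    ‖(‖a‖⁻¹ • a : ℂ) - ‖b‖⁻¹ • b‖ ≤ 2 * ‖a - b‖ / ‖b‖ := by
  have ha' := norm_pos_iff.2 ha
  have hb' := norm_pos_iff.2 hb
  have e : (‖a‖⁻¹ • a : ℂ) - ‖b‖⁻¹ • b = ‖b‖⁻¹ • ((‖b‖ - ‖a‖) • (‖a‖⁻¹ • a) + (a - b)) := by
    have h1 : ‖a‖ • (‖a‖⁻¹ • a) = a := by rw [smul_smul, mul_inv_cancel₀ ha'.ne', one_smul]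
    have h2 : ‖b‖⁻¹ • (‖b‖ • (‖a‖⁻¹ • a)) = ‖a‖⁻¹ • a := by
      rw [smul_smul, inv_mul_cancel₀ hb'.ne', one_smul]
    rw [sub_smul, h1, sub_add_sub_cancel, smul_sub, h2]
  have h3 : ‖(‖a‖⁻¹ • a : ℂ)‖ = 1 := by
    rw [norm_smul, norm_inv, norm_norm, inv_mul_cancel₀ ha'.ne']
  have h4 : ‖(‖b‖ - ‖a‖) • (‖a‖⁻¹ • a : ℂ)‖ ≤ ‖a - b‖ := by
    rw [norm_smul, h3, mul_one, norm_sub_rev]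
    exact abs_norm_sub_norm_le a b
  rw [e, norm_smul, norm_inv, norm_norm, inv_mul_eq_div]
  gcongr
  linarith [norm_add_le ((‖b‖ - ‖a‖) • (‖a‖⁻¹ • a : ℂ)) (a - b)]

/-- The radiation condition does not depend on the center of the radial variable. -/
lemma IsOutgoing.change_center {v : ℂ → ℂ} {p : ℂ} (h : IsOutgoing v p) (hv : ContDiff ℝ 2 v)
    (hg : HasCompactSupport fun y => lapC v y + v y) (x : ℂ) : IsOutgoing v x := by
  intro ε hε
  set d := ‖x - p‖ with hd
  have hd0 : 0 ≤ d := norm_nonneg _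
  set δ := ε / (2 * (1 + 2 * d)) with hδ
  have hδ0 : 0 < δ := by positivity
  obtain ⟨R₁, hR₁, h1⟩ := h δ hδ0
  obtain ⟨R₂, hR₂, h2⟩ := h.norm_fderiv_le hv hg hδ0
  refine ⟨max R₁ R₂ + 2 * d, by positivity, fun y hy => ?_⟩
  have hmax : 0 < max R₁ R₂ := by positivity
  have t1 : ‖y - x‖ ≤ ‖y - p‖ + d := by
    rw [hd, norm_sub_rev x p]
    exact norm_sub_le_norm_sub_add_norm_sub y p x
  have hρR : max R₁ R₂ ≤ ‖y - p‖ := by linarith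
  have hρ0 : 0 < ‖y - p‖ := hmax.trans_le hρR
  have t2 : √‖y - x‖ ≤ 2 * √‖y - p‖ := by
    have : ‖y - x‖ ≤ 2 ^ 2 * ‖y - p‖ := by linarith
    refine (Real.sqrt_le_sqrt this).trans ?_
    rw [Real.sqrt_mul (by positivity), Real.sqrt_sq zero_le_two]
  have hs0 : 0 < √‖y - p‖ := Real.sqrt_pos.2 hρ0
  have hx0 : 0 < ‖y - x‖ := by linarith
  have e1 := h1 y ((le_max_left _ _).trans hρR)
  have e2 := h2 y ((le_max_right _ _).trans hρR)
  have e3 := norm_normalize_sub_normalize_le (norm_pos_iff.1 hx0) (norm_pos_iff.1 hρ0)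
  have e4 : y - x - (y - p) = -(x - p) := by ring
  rw [e4, norm_neg, ← hd] at e3
  have e5 : fderiv ℝ v y (‖y - x‖⁻¹ • (y - x)) - Complex.I * v y
      = (fderiv ℝ v y (‖y - p‖⁻¹ • (y - p)) - Complex.I * v y)
        + fderiv ℝ v y (‖y - x‖⁻¹ • (y - x) - ‖y - p‖⁻¹ • (y - p)) := by
    rw [map_sub]
    ring
  have e6 : ‖fderiv ℝ v y (‖y - x‖⁻¹ • (y - x) - ‖y - p‖⁻¹ • (y - p))‖
      ≤ δ * √‖y - p‖ * (2 * d / ‖y - p‖) :=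
    ((fderiv ℝ v y).le_opNorm _).trans (by gcongr)
  rw [e5]
  calc _ ≤ 2 * √‖y - p‖ * (‖fderiv ℝ v y (‖y - p‖⁻¹ • (y - p)) - Complex.I * v y‖
        + δ * √‖y - p‖ * (2 * d / ‖y - p‖)) := by
        gcongr
        exact (norm_add_le _ _).trans (by gcongr)
    _ = 2 * (√‖y - p‖ * ‖fderiv ℝ v y (‖y - p‖⁻¹ • (y - p)) - Complex.I * v y‖)
        + 2 * (δ * (√‖y - p‖ ^ 2) * (2 * d / ‖y - p‖)) := by ring
    _ ≤ 2 * δ + 2 * (δ * (√‖y - p‖ ^ 2) * (2 * d / ‖y - p‖)) := by gcongr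
    _ = ε := by
        rw [Real.sq_sqrt hρ0.le, hδ]
        field_simp

lemma IsOutgoing.tendsto_wronskian {v : ℂ → ℂ} {x : ℂ} (h : IsOutgoing v x) (hv : ContDiff ℝ 2 v) :
    Tendsto (fun r : ℝ => r * (circleIntDeriv v x r * hankel r - circleInt v x r * hankelDeriv r))
      atTop (𝓝 0) := by
  rw [Metric.tendsto_atTop]
  intro ε hε
  set δ := ε / (8 * π * √π) with hδ
  have hδ0 : 0 < δ := by positivity
  obtain ⟨R₁, hR₁, h1⟩ := h δ hδ0
  obtain ⟨R₂, hR₂, h2⟩ := h.norm_le hv hδ0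
  refine ⟨max (max R₁ R₂) 1, fun r hr => ?_⟩
  have hr1 : R₁ ≤ r := (le_max_left _ _).trans ((le_max_left _ _).trans hr)
  have hr2 : R₂ ≤ r := (le_max_right _ _).trans ((le_max_left _ _).trans hr)
  have hr3 : 1 ≤ r := (le_max_right _ _).trans hr
  have hr0 : 0 < r := by linarith
  have hs0 : 0 < √r := Real.sqrt_pos.2 hr0
  have hvc := hv.continuous
  have hfc : Continuous (fderiv ℝ v) := (contDiff_fderiv_one hv).continuous
  have m1 : ‖circleInt v x r‖ ≤ δ * √r * (2 * π) := by
    have := intervalIntegral.norm_integral_le_of_norm_le_const (a := -π) (b := π)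
      (f := fun φ => v (x + r * unitDir φ)) (C := δ * √r) fun φ _ => by
        have := h2 (x + r * unitDir φ)
        rw [norm_radial_sub x hr0.le] at this
        exact this hr2
    rwa [sub_neg_eq_add, ← two_mul, abs_of_pos (by positivity)] at this
  have m2 : ‖circleIntDeriv v x r - Complex.I * circleInt v x r‖ ≤ δ / √r * (2 * π) := by
    have e : circleIntDeriv v x r - Complex.I * circleInt v x r = ∫ φ in (-π)..π,
        (fderiv ℝ v (x + r * unitDir φ) (unitDir φ) - Complex.I * v (x + r * unitDir φ)) := by
      rw [circleIntDeriv, circleInt, ← intervalIntegral.integral_const_mul,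
        ← intervalIntegral.integral_sub]
      · exact Continuous.intervalIntegrable (by fun_prop) _ _
      · exact Continuous.intervalIntegrable (by fun_prop) _ _
    have := intervalIntegral.norm_integral_le_of_norm_le_const (a := -π) (b := π)
      (f := fun φ => fderiv ℝ v (x + r * unitDir φ) (unitDir φ) - Complex.I * v (x + r * unitDir φ))
      (C := δ / √r) fun φ _ => by
        have := h1 (x + r * unitDir φ)
        rw [norm_radial_sub x hr0.le, add_sub_cancel_left, ← Complex.real_smul, smul_smul,
          inv_mul_cancel₀ hr0.ne', one_smul] at this
        rw [le_div_iff₀ hs0, mul_comm]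
        exact this hr1
    rw [e]
    rwa [sub_neg_eq_add, ← two_mul, abs_of_pos (by positivity)] at this
  have n1 : ‖hankel r‖ ≤ √π / √r := by
    have := norm_hankel_le (z := r) (by simpa using hr0)
    simpa using this
  have n2 := norm_hankelDeriv_sub_le hr0
  have e : (r : ℂ) * (circleIntDeriv v x r * hankel r - circleInt v x r * hankelDeriv r)
      = r * ((circleIntDeriv v x r - Complex.I * circleInt v x r) * hankel r
        - circleInt v x r * (hankelDeriv r - Complex.I * hankel r)) := by ring
  rw [dist_zero_right, e, norm_mul, Complex.norm_real, Real.norm_of_nonneg hr0.le]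
  calc _ ≤ r * (δ / √r * (2 * π) * (√π / √r) + δ * √r * (2 * π) * (√π / (r * √r))) := by
        gcongr
        refine (norm_sub_le _ _).trans ?_
        rw [norm_mul, norm_mul]
        gcongr
    _ = δ * (2 * π) * √π * (r / (√r ^ 2)) + δ * (2 * π) * √π := by
        field_simp
    _ = ε / 2 := by
        rw [Real.sq_sqrt hr0.le, hδ]
        field_simp
        norm_num
    _ < ε := by linarith

/-- Representation of an outgoing function away from the support of its source. -/
lemma IsOutgoing.integral_hankel_mul {v : ℂ → ℂ} {p : ℂ} (h : IsOutgoing v p)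
    (hv : ContDiff ℝ 2 v) (hg : HasCompactSupport fun y => lapC v y + v y) {x : ℂ}
    (hx : x ∉ tsupport fun y => lapC v y + v y) :
    ∫ y, hankel ‖y - x‖ * (lapC v y + v y) = -(2 * π * v x) := by
  refine integral_eq_of_radial_fundamental hv x (E := fun r => hankel r)
    (E' := fun r => hankelDeriv r) (k := 0) ?_ ?_ tendsto_mul_hankel_zero
    tendsto_mul_hankelDeriv_zero ((h.change_center hv hg x).tendsto_wronskian hv) ?_ ?_ ?_
  · exact fun r hr => (hasDerivAt_hankel (z := r) (by simpa using hr)).comp_ofReal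
  · intro r hr
    refine (hasDerivAt_mul_hankelDeriv (z := r) (by simpa using hr)).comp_ofReal.congr_deriv ?_
    simp
  · rw [continuous_iff_continuousAt]
    intro y
    by_cases hy : y = x
    · rw [hy]
      have : (fun y => hankel ‖y - x‖ * (lapC v y + v y)) =ᶠ[𝓝 x] fun _ => 0 := by
        filter_upwards [notMem_tsupport_iff_eventuallyEq.1 hx] with z hz
        rw [hz, Pi.zero_apply, mul_zero]
      exact continuousAt_const.congr this.symm
    · have h1 : 0 < ‖y - x‖ := norm_pos_iff.2 (sub_ne_zero.2 hy)
      have h2 : ContinuousAt hankel (‖y - x‖ : ℝ) :=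
        (hasDerivAt_hankel (by simpa using h1)).continuousAt
      have h3 : Continuous fun y : ℂ => ((‖y - x‖ : ℝ) : ℂ) := by fun_prop
      have h4 : ContinuousAt (fun y : ℂ => hankel (‖y - x‖ : ℝ)) y :=
        ContinuousAt.comp (g := hankel) h2 h3.continuousAt
      exact h4.mul ((continuous_lapC hv).add hv.continuous).continuousAt
  · exact hg.mul_left
  · intro y _
    simp

/-- A holomorphic function of exponential decay in `|Im z|` with rate one on the right half-plane
vanishes. -/
lemma eqOn_zero_of_norm_le_exp_neg_abs_im {f : ℂ → ℂ} {C : ℝ}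
    (hf : DiffContOnCl ℂ f {z | 0 < z.re})
    (hC : ∀ z : ℂ, 0 ≤ z.re → ‖f z‖ ≤ C * rexp (-|z.im|)) : EqOn f 0 {z | 0 ≤ z.re} := by
  have hmem : ∀ z : ℂ, 0 ≤ z.re → 1 + z ∈ Complex.slitPlane := fun z hz => by
    left
    simp only [Complex.add_re, Complex.one_re]
    linarith
  have hcl : closure {z : ℂ | 0 < z.re} = {z | 0 ≤ z.re} := Complex.closure_setOfPred_lt_re 0
  set G : ℂ → ℂ := fun z => Complex.exp (-(2 / π) * (z * Complex.log (1 + z))) * f z with hG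
  have hre : ∀ z : ℂ, (-(2 / π : ℂ) * (z * Complex.log (1 + z))).re
      = -(2 / π) * (z.re * Real.log ‖1 + z‖ - z.im * Complex.arg (1 + z)) := fun z => by
    have : (-(2 / π : ℂ)) = ((-(2 / π) : ℝ) : ℂ) := by push_cast; rfl
    rw [this, Complex.re_ofReal_mul, Complex.mul_re, Complex.log_re, Complex.log_im]
  have hnorm : ∀ z : ℂ, 0 ≤ z.re →
      ‖G z‖ ≤ C * rexp (-(2 / π) * (z.re * Real.log ‖1 + z‖)) := by
    intro z hz
    have h1 : |Complex.arg (1 + z)| ≤ π / 2 := by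
      rw [Complex.abs_arg_le_pi_div_two_iff]
      simp only [Complex.add_re, Complex.one_re]
      linarith
    have h2 : z.im * Complex.arg (1 + z) ≤ |z.im| * (π / 2) := by
      refine (le_abs_self _).trans ?_
      rw [abs_mul]
      gcongr
    have h3 : -(2 / π) * (z.re * Real.log ‖1 + z‖ - z.im * Complex.arg (1 + z))
        ≤ -(2 / π) * (z.re * Real.log ‖1 + z‖) + |z.im| := by
      have : 2 / π * (z.im * Complex.arg (1 + z)) ≤ 2 / π * (|z.im| * (π / 2)) := by gcongr
      have e : 2 / π * (|z.im| * (π / 2)) = |z.im| := by field_simp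
      linarith
    rw [hG]
    simp only
    rw [norm_mul, Complex.norm_exp, hre]
    calc _ ≤ rexp (-(2 / π) * (z.re * Real.log ‖1 + z‖) + |z.im|) * (C * rexp (-|z.im|)) :=
          mul_le_mul (Real.exp_le_exp.2 h3) (hC z hz) (norm_nonneg _) (Real.exp_pos _).le
      _ = _ := by
          rw [Real.exp_add, Real.exp_neg |z.im|]
          field_simp
  have hC0 : 0 ≤ C := by
    have := (norm_nonneg _).trans (hC 0 le_rfl)
    simpa using this
  have hbdd : ∀ z : ℂ, 0 ≤ z.re → ‖G z‖ ≤ C := by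
    intro z hz
    refine (hnorm z hz).trans (mul_le_of_le_one_right hC0 (Real.exp_le_one_iff.2 ?_))
    have h1 : 1 ≤ ‖1 + z‖ := by
      refine le_trans ?_ (Complex.re_le_norm _)
      simpa using hz
    have := Real.log_nonneg h1
    rw [neg_mul, neg_nonpos]
    positivity
  have hGz : EqOn G 0 {z | 0 ≤ z.re} := by
    refine PhragmenLindelof.eq_zero_on_right_half_plane_of_superexponential_decay ?_ ?_ ?_ ?_
    · refine DiffContOnCl.smul (𝕜 := ℂ) (𝕜' := ℂ) (F := ℂ) (DifferentiableOn.diffContOnCl ?_) hf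
      rw [hcl]
      intro z hz
      have h1 : DifferentiableAt ℂ (fun z => Complex.log (1 + z)) z :=
        (differentiableAt_id.const_add 1).clog (hmem z hz)
      exact ((differentiableAt_id.mul h1).const_mul _).cexp.differentiableWithinAt
    · refine ⟨0, by norm_num, 0, Asymptotics.IsBigO.of_bound C ?_⟩
      rw [eventually_inf_principal]
      refine Eventually.of_forall fun z hz => ?_
      simpa using hbdd z (le_of_lt hz)
    · intro n
      have hlim : Tendsto (fun x : ℝ => C * rexp (-(x * (2 / π * Real.log (1 + x) - n)))) atTop
          (𝓝 (C * 0)) := by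
        refine Tendsto.const_mul _ (Real.tendsto_exp_neg_atTop_nhds_zero.comp ?_)
        refine tendsto_id.atTop_mul_atTop₀ (tendsto_atTop_add_const_right _ _ ?_)
        refine Tendsto.const_mul_atTop (by positivity) (Real.tendsto_log_atTop.comp ?_)
        exact tendsto_atTop_add_const_left _ _ tendsto_id
      rw [mul_zero] at hlim
      refine squeeze_zero' (Eventually.of_forall fun x => by positivity) ?_ hlim
      filter_upwards [eventually_ge_atTop 0] with x hx
      have h1 := hnorm x (by simpa using hx)
      have h2 : ‖(1 + x : ℂ)‖ = 1 + x := by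
        rw [← Complex.ofReal_one, ← Complex.ofReal_add, Complex.norm_real,
          Real.norm_of_nonneg (by linarith)]
      rw [h2, Complex.ofReal_re] at h1
      calc rexp x ^ n * ‖G x‖ ≤ rexp (n * x) * (C * rexp (-(2 / π) * (x * Real.log (1 + x)))) := by
            rw [Real.exp_nat_mul]
            gcongr
        _ = C * rexp (-(x * (2 / π * Real.log (1 + x) - n))) := by
            rw [mul_left_comm, ← Real.exp_add]
            ring_nf
    · exact ⟨C, fun x => hbdd _ (by simp)⟩
  intro z hz
  have := hGz hz
  simpa [hG] using this

/-- A function holomorphic near the real axis and on a right half-plane, decaying exponentially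
in the upper half of the latter, vanishes on the real axis once it is real on an interval. -/
lemma eq_zero_of_im_eq_zero_on_Ioo {F : ℂ → ℂ} {Ω : Set ℂ} (hΩ : IsOpen Ω)
    (hF : DifferentiableOn ℂ F Ω) (hreal : ∀ s : ℝ, (s : ℂ) ∈ Ω) {R C : ℝ}
    (hhalf : ∀ z : ℂ, R < z.re → z ∈ Ω)
    (hC : ∀ z : ℂ, R + 1 ≤ z.re → ‖F z‖ ≤ C * rexp (-z.im)) {a b : ℝ} (hab : a < b)
    (him : ∀ s ∈ Ioo a b, (F (s : ℝ)).im = 0) (s : ℝ) : F s = 0 := by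
  have hFr : AnalyticOnNhd ℝ (fun s : ℝ => F s) univ := fun s _ => by
    have h1 : AnalyticAt ℝ F (Complex.ofRealCLM s) :=
      (hF.analyticAt (hΩ.mem_nhds (hreal s))).restrictScalars
    exact h1.comp (Complex.ofRealCLM.analyticAt s)
  have hFim : ∀ s : ℝ, (F s).im = 0 := by
    have h1 : AnalyticOnNhd ℝ (fun s : ℝ => (F s).im) univ := fun s hs =>
      (Complex.imCLM.analyticAt (F s)).comp (f := fun s : ℝ => F s) (hFr s hs)
    have h2 := h1.eqOn_zero_of_preconnected_of_eventuallyEq_zero isPreconnected_univ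
      (mem_univ ((a + b) / 2)) ?_
    · exact fun s => h2 (mem_univ s)
    · filter_upwards [Ioo_mem_nhds (by linarith : a < (a + b) / 2) (by linarith : (a + b) / 2 < b)]
        with s hs using him s hs
  set H : Set ℂ := {z | R < z.re} with hH
  have hHo : IsOpen H := isOpen_lt continuous_const Complex.continuous_re
  have hHc : IsPreconnected H := (convex_halfSpace_re_gt R).isPreconnected
  have hFH : DifferentiableOn ℂ F H := hF.mono hhalf
  have hconj : EqOn F (fun z => (starRingEnd ℂ) (F ((starRingEnd ℂ) z))) H := by
    refine AnalyticOnNhd.eqOn_of_preconnected_of_frequently_eq (hFH.analyticOnNhd hHo)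
      (DifferentiableOn.analyticOnNhd (fun z hz => ?_) hHo) hHc (z₀ := ((R + 1 : ℝ) : ℂ)) ?_ ?_
    · have : (starRingEnd ℂ) z ∈ H := by simpa [hH] using hz
      have := (hFH.differentiableAt (hHo.mem_nhds this)).conj_conj
      simpa [Function.comp_def] using! this.differentiableWithinAt
    · simp [hH]
    · have hmap : Tendsto (fun s : ℝ => (s : ℂ)) (𝓝[≠] (R + 1)) (𝓝[≠] ((R + 1 : ℝ) : ℂ)) := by
        refine Complex.continuous_ofReal.continuousAt.tendsto.inf ?_
        rw [tendsto_principal_principal]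
        exact fun s hs h => hs (Complex.ofReal_injective h)
      refine hmap.frequently (Eventually.frequently (Eventually.of_forall fun s => ?_))
      rw [Complex.conj_ofReal, Complex.conj_eq_iff_im.2 (hFim s)]
  have hC0 : 0 ≤ C := by
    have := (norm_nonneg _).trans (hC ((R + 1 : ℝ) : ℂ) (by simp))
    simpa using this
  have hzero : ∀ z : ℂ, 0 ≤ z.re → F (z + (R + 1 : ℝ)) = 0 := by
    have hd : Differentiable ℂ fun z : ℂ => z + ((R + 1 : ℝ) : ℂ) := by fun_prop
    refine eqOn_zero_of_norm_le_exp_neg_abs_im (f := fun z => F (z + (R + 1 : ℝ))) (C := C) ?_ ?_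
    · refine DifferentiableOn.diffContOnCl ?_
      rw [Complex.closure_setOfPred_lt_re]
      refine hFH.comp hd.differentiableOn fun z hz => ?_
      have : 0 ≤ z.re := hz
      simp only [hH, mem_ofPred_eq, Complex.add_re, Complex.ofReal_re]
      linarith
    · intro z hz
      have hz1 : R + 1 ≤ (z + (R + 1 : ℝ)).re := by simpa using hz
      rcases le_total 0 z.im with h | h
      · have := hC _ hz1
        rw [abs_of_nonneg h]
        simpa using this
      · have h1 := hconj (x := z + (R + 1 : ℝ)) (by simp only [hH, mem_ofPred_eq]; linarith)
        simp only at h1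
        rw [h1, Complex.norm_conj, abs_of_nonpos h]
        have := hC ((starRingEnd ℂ) (z + (R + 1 : ℝ))) (by rwa [Complex.conj_re])
        simpa using this
  have h2 := hFr.eqOn_zero_of_preconnected_of_eventuallyEq_zero isPreconnected_univ
    (mem_univ (R + 2)) ?_
  · exact h2 (mem_univ s)
  · filter_upwards [Ioi_mem_nhds (by linarith : R + 1 < R + 2)] with t ht
    have h3 := hzero ((t - (R + 1) : ℝ) : ℂ) (by
      rw [Complex.ofReal_re]
      linarith [mem_Ioi.1 ht])
    rw [← Complex.ofReal_add, sub_add_cancel] at h3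
    exact h3

/-- Differentiation under the integral over a compact set, with jointly continuous derivative. -/
lemma differentiableOn_setIntegral_of_continuousOn {F F' : ℂ → ℂ → ℂ} {Ω S : Set ℂ}
    (hΩ : IsOpen Ω) (hS : IsCompact S) (hF : ∀ s ∈ Ω, ContinuousOn (F s) S)
    (hF' : ContinuousOn (Function.uncurry F') (Ω ×ˢ S))
    (hd : ∀ s ∈ Ω, ∀ y ∈ S, HasDerivAt (fun s => F s y) (F' s y) s) :
    DifferentiableOn ℂ (fun s => ∫ y in S, F s y) Ω := by
  intro s hs
  obtain ⟨ε, hε, hball⟩ := Metric.nhds_basis_closedBall.mem_iff.1 (hΩ.mem_nhds hs)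
  obtain ⟨C, hC⟩ := ((isCompact_closedBall s ε).prod hS).exists_bound_of_continuousOn
    (hF'.mono (prod_mono hball le_rfl))
  have hFs' : ContinuousOn (F' s) S :=
    hF'.comp (f := fun y => (s, y)) (by fun_prop) fun y hy => ⟨hs, hy⟩
  refine (hasDerivAt_integral_of_dominated_loc_of_deriv_le (F' := F') (bound := fun _ => C)
    (Metric.closedBall_mem_nhds s hε) ?_ ((hF s hs).integrableOn_compact hS)
    (hFs'.aestronglyMeasurable hS.measurableSet) ?_ ?_ ?_).2.differentiableAt.differentiableWithinAt
  · filter_upwards [hΩ.mem_nhds hs] with t ht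
    exact (hF t ht).aestronglyMeasurable hS.measurableSet
  · filter_upwards [ae_restrict_mem hS.measurableSet] with y hy t ht using hC (t, y) ⟨ht, hy⟩
  · exact integrableOn_const hS.measure_ne_top
  · filter_upwards [ae_restrict_mem hS.measurableSet] with y hy t ht using hd t (hball ht) y hy

/-- The squared distance from a point `s` of the real axis to `y`, for complex `s`. -/
def axisDistSq (s y : ℂ) : ℂ := (s - y.re) ^ 2 + (y.im : ℂ) ^ 2

/-- The holomorphic continuation in `s` of the distance from a point `s` of the real axis
to `y`. -/
def axisDist (s y : ℂ) : ℂ := axisDistSq s y ^ (2⁻¹ : ℂ)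

lemma continuous_axisDistSq : Continuous (Function.uncurry axisDistSq) := by
  unfold Function.uncurry axisDistSq
  fun_prop

lemma axisDist_sq (s y : ℂ) : axisDist s y ^ 2 = axisDistSq s y := by
  simp [axisDist]

lemma re_axisDist_pos {s y : ℂ} (h : axisDistSq s y ∈ Complex.slitPlane) :
    0 < (axisDist s y).re := by
  have h0 : axisDistSq s y ≠ 0 := Complex.slitPlane_ne_zero h
  rw [axisDist, Complex.cpow_def_of_ne_zero h0, Complex.exp_re]
  refine mul_pos (Real.exp_pos _) (Real.cos_pos_of_mem_Ioo ?_)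
  have e : (Complex.log (axisDistSq s y) * 2⁻¹).im = (axisDistSq s y).arg / 2 := by
    have : (2⁻¹ : ℂ) = ((2⁻¹ : ℝ) : ℂ) := by push_cast; rfl
    rw [this, Complex.im_mul_ofReal, Complex.log_im]
    ring
  rw [e]
  have h1 := Complex.neg_pi_lt_arg (axisDistSq s y)
  have h2 := (Complex.arg_le_pi (axisDistSq s y)).lt_of_ne (Complex.slitPlane_arg_ne_pi h)
  constructor <;> linarith

lemma axisDist_ofReal (s : ℝ) (y : ℂ) : axisDist s y = ‖y - s‖ := by
  have h : axisDistSq s y = ((‖y - s‖ ^ 2 : ℝ) : ℂ) := by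
    rw [Complex.sq_norm, Complex.normSq_apply, axisDistSq]
    simp only [Complex.sub_re, Complex.sub_im, Complex.ofReal_re, Complex.ofReal_im]
    push_cast
    ring
  have h2 : (2⁻¹ : ℂ) = ((2⁻¹ : ℝ) : ℂ) := by push_cast; rfl
  rw [axisDist, h, h2, ← Complex.ofReal_cpow (by positivity), ← one_div, ← Real.sqrt_eq_rpow,
    Real.sqrt_sq (norm_nonneg _)]

lemma axisDistSq_mem_slitPlane_of_ofReal {s : ℝ} {y : ℂ} (hy : y.im ≠ 0) :
    axisDistSq s y ∈ Complex.slitPlane := by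
  have h : axisDistSq s y = (((s - y.re) ^ 2 + y.im ^ 2 : ℝ) : ℂ) := by
    rw [axisDistSq]
    push_cast
    rfl
  rw [h, Complex.ofReal_mem_slitPlane]
  positivity

lemma axisDistSq_mem_slitPlane_of_re_lt {s y : ℂ} (h : y.re < s.re) :
    axisDistSq s y ∈ Complex.slitPlane := by
  rw [Complex.mem_slitPlane_iff]
  have h1 : (axisDistSq s y).re = (s.re - y.re) ^ 2 - s.im ^ 2 + y.im ^ 2 := by
    simp [axisDistSq, pow_two]
  have h2 : (axisDistSq s y).im = 2 * (s.re - y.re) * s.im := by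
    simp [axisDistSq, pow_two]
    ring
  by_cases h3 : s.im = 0
  · left
    have := pow_pos (sub_pos.2 h) 2
    rw [h1, h3]
    linarith [sq_nonneg y.im]
  · right
    rw [h2]
    exact mul_ne_zero (mul_ne_zero two_ne_zero (sub_pos.2 h).ne') h3

/-- The domain of holomorphy of `axisDist` for all points of `S`. -/
def axisDomain (S : Set ℂ) : Set ℂ := {s | ∀ y ∈ S, axisDistSq s y ∈ Complex.slitPlane}

lemma isOpen_axisDomain {S : Set ℂ} (hS : IsCompact S) : IsOpen (axisDomain S) := by
  rw [isOpen_iff_mem_nhds]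
  intro s hs
  refine hS.eventually_forall_of_forall_eventually fun y hy => ?_
  exact continuous_axisDistSq.continuousAt.eventually_mem
    (Complex.isOpen_slitPlane.mem_nhds (hs y hy))

lemma continuousOn_axisDist (S : Set ℂ) :
    ContinuousOn (Function.uncurry axisDist) (axisDomain S ×ˢ S) :=
  continuous_axisDistSq.continuousOn.cpow continuousOn_const fun p hp => hp.1 p.2 hp.2

lemma hasDerivAt_axisDist {s y : ℂ} (h : axisDistSq s y ∈ Complex.slitPlane) :
    HasDerivAt (fun s => axisDist s y) ((s - y.re) / axisDist s y) s := by
  have h0 : axisDistSq s y ≠ 0 := Complex.slitPlane_ne_zero h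
  have hD0 : axisDist s y ≠ 0 := fun h' => by
    have := re_axisDist_pos h
    rw [h', Complex.zero_re] at this
    exact lt_irrefl _ this
  have h1 : HasDerivAt (fun s => axisDistSq s y) (2 * (s - y.re)) s := by
    have := (((hasDerivAt_id s).sub_const (y.re : ℂ)).pow 2).add_const ((y.im : ℂ) ^ 2)
    simpa [axisDistSq] using! this
  refine (h1.cpow_const (c := 2⁻¹) h).congr_deriv ?_
  have e : axisDistSq s y ^ ((2⁻¹ : ℂ) - 1) = (axisDist s y)⁻¹ := by
    rw [Complex.cpow_sub _ _ h0, Complex.cpow_one, ← axisDist, ← axisDist_sq]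
    field_simp
  rw [e]
  field_simp

/-- The continuation of a Helmholtz potential from the real axis is holomorphic. -/
lemma differentiableOn_axisPotential {S : Set ℂ} (hS : IsCompact S) {g : ℂ → ℂ}
    (hg : Continuous g) :
    DifferentiableOn ℂ (fun s => ∫ y in S, hankel (axisDist s y) * g y) (axisDomain S) := by
  have hD := continuousOn_axisDist S
  have hmaps : MapsTo (Function.uncurry axisDist) (axisDomain S ×ˢ S) {z : ℂ | 0 < z.re} :=
    fun p hp => re_axisDist_pos (hp.1 p.2 hp.2)
  refine differentiableOn_setIntegral_of_continuousOn
    (F' := fun s y => hankelDeriv (axisDist s y) * ((s - y.re) / axisDist s y) * g y)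
    (isOpen_axisDomain hS) hS ?_ ?_ ?_
  · intro s hs
    refine ContinuousOn.mul ?_ hg.continuousOn
    have h1 : ContinuousOn (fun y => axisDist s y) S :=
      hD.comp (f := fun y => (s, y)) (by fun_prop) fun y hy => ⟨hs, hy⟩
    exact differentiableOn_hankel.continuousOn.comp h1 fun y hy => re_axisDist_pos (hs y hy)
  · refine ((differentiableOn_hankelDeriv.continuousOn.comp hD hmaps).mul
      (ContinuousOn.div (f := fun p : ℂ × ℂ => p.1 - (p.2.re : ℂ)) (by fun_prop) hD
        fun p hp h => ?_)).mul
      (by fun_prop : Continuous fun p : ℂ × ℂ => g p.2).continuousOn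
    have := hmaps hp
    rw [mem_ofPred_eq, h, Complex.zero_re] at this
    exact lt_irrefl _ this
  · intro s hs y hy
    have h1 := (hasDerivAt_hankel (re_axisDist_pos (hs y hy))).comp s (hasDerivAt_axisDist (hs y hy))
    exact h1.mul_const (g y)

lemma norm_axisDist_sub_le {s y : ℂ} (h : y.re + 1 ≤ s.re) :
    1 ≤ (axisDist s y).re ∧ ‖axisDist s y - (s - y.re)‖ ≤ y.im ^ 2 := by
  set D := axisDist s y with hD
  set t : ℂ := s - y.re with ht
  have htre : 1 ≤ t.re := by
    rw [ht, Complex.sub_re, Complex.ofReal_re]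
    linarith
  have hDpos : 0 < D.re := re_axisDist_pos (axisDistSq_mem_slitPlane_of_re_lt (by linarith))
  have hprod : (D - t) * (D + t) = (y.im : ℂ) ^ 2 := by
    have := axisDist_sq s y
    rw [← hD, axisDistSq, ← ht] at this
    linear_combination this
  have hsum : 1 ≤ ‖D + t‖ := by
    refine le_trans ?_ (Complex.re_le_norm _)
    rw [Complex.add_re]
    linarith
  have hre : t.re ≤ D.re := by
    have hre2 := congrArg Complex.re hprod
    have him2 := congrArg Complex.im hprod
    simp only [Complex.mul_re, Complex.mul_im, Complex.sub_re, Complex.sub_im, Complex.add_re,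
      Complex.add_im, pow_two, Complex.ofReal_re, Complex.ofReal_im] at hre2 him2
    have hmul : (D.re - t.re) * ((D.re + t.re) ^ 2 + (D.im + t.im) ^ 2)
        = y.im ^ 2 * (D.re + t.re) := by
      linear_combination (D.re + t.re) * hre2 + (D.im + t.im) * him2
    have hpos : 0 < D.re + t.re := by linarith
    have h1 : 0 ≤ (D.re - t.re) * ((D.re + t.re) ^ 2 + (D.im + t.im) ^ 2) := by
      rw [hmul]
      positivity
    exact sub_nonneg.1 (nonneg_of_mul_nonneg_left h1 (by positivity))
  refine ⟨htre.trans hre, ?_⟩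
  have hn := congrArg norm hprod
  rw [norm_mul, norm_pow, Complex.norm_real, Real.norm_eq_abs, sq_abs] at hn
  rw [← hn]
  exact le_mul_of_one_le_right (norm_nonneg _) hsum

lemma norm_axisPotential_le {S : Set ℂ} (hS : IsCompact S) {R : ℝ} (hR : ∀ y ∈ S, ‖y‖ ≤ R)
    {g : ℂ → ℂ} (hg : Continuous g) : ∃ C : ℝ, ∀ s : ℂ, R + 1 ≤ s.re →
      ‖∫ y in S, hankel (axisDist s y) * g y‖ ≤ C * rexp (-s.im) := by
  obtain ⟨M, hM⟩ := hS.exists_bound_of_continuousOn hg.continuousOn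
  refine ⟨rexp (R ^ 2) * √π * M * volume.real S, fun s hs => ?_⟩
  have := norm_setIntegral_le_of_norm_le_const (μ := volume) (s := S)
    (f := fun y => hankel (axisDist s y) * g y) (C := rexp (-s.im + R ^ 2) * √π * M)
    hS.measure_lt_top fun y hy => ?_
  · refine this.trans (le_of_eq ?_)
    rw [Real.exp_add]
    ring
  · have hyR := hR y hy
    obtain ⟨h1, h2⟩ := norm_axisDist_sub_le (s := s) (y := y)
      (by linarith [Complex.re_le_norm y])
    have h3 : y.im ^ 2 ≤ R ^ 2 := by
      refine sq_le_sq' ?_ ?_ <;> linarith [abs_le.1 (Complex.abs_im_le_norm y)]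
    have h4 := (abs_le.1 ((Complex.abs_im_le_norm _).trans (h2.trans h3))).1
    simp only [Complex.sub_im, Complex.ofReal_im, sub_zero] at h4
    have h5 : √π / √(axisDist s y).re ≤ √π :=
      div_le_self (Real.sqrt_nonneg _) (Real.one_le_sqrt.2 h1)
    rw [norm_mul]
    refine mul_le_mul ((norm_hankel_le (by linarith)).trans ?_) (hM y hy) (norm_nonneg _)
      (by positivity)
    gcongr
    linarith

lemma lapC_congr_of_eventuallyEq {v w : ℂ → ℂ} {z : ℂ} (h : v =ᶠ[𝓝 z] w) : lapC v z = lapC w z := by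
  unfold lapC
  rw [h.fderiv.fderiv_eq]

/-- A smooth function vanishing near a compact set and equal to one outside a given compact
neighbourhood of it. -/
lemma exists_contDiff_cutoff {K N : Set ℂ} (hK : IsCompact K) (hKN : K ⊆ interior N) :
    ∃ χ : ℂ → ℝ, ContDiff ℝ 2 χ ∧ (∀ x ∈ K, χ =ᶠ[𝓝 x] 0) ∧ ∀ x ∉ N, χ x = 1 := by
  obtain ⟨N₀, hN₀, hKN₀, hN₀N⟩ := exists_compact_between hK isOpen_interior hKN
  obtain ⟨f, hf0, hf1, -⟩ := exists_contMDiffMap_zero_one_of_isClosed (n := 2)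
    (modelWithCornersSelf ℝ ℂ) hN₀.isClosed (isOpen_interior (s := N)).isClosed_compl
    (disjoint_compl_right_iff_subset.2 hN₀N)
  refine ⟨f, f.contMDiff.contDiff, fun x hx => ?_, fun x hx => ?_⟩
  · filter_upwards [isOpen_interior.mem_nhds (hKN₀ hx)] with y hy using hf0 (interior_subset hy)
  · exact hf1 fun h => hx (interior_subset h)

/-- An outgoing solution of the Helmholtz equation in an exterior domain containing the real axis
vanishes on the real axis as soon as it is real on an interval. -/
theorem eq_zero_on_real_axis_of_im_eq_zero {V : Set ℂ} (hV : IsOpen V) (hK : IsCompact Vᶜ)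
    (hreal : ∀ s : ℝ, (s : ℂ) ∈ V) {Ψ : ℂ → ℂ} (hΨ : ContDiffOn ℝ 2 Ψ V)
    (hhelm : ∀ z ∈ V, lapC Ψ z + Ψ z = 0) {p : ℂ}
    (hout : ∀ ε > 0, ∃ R > 0, ∀ z ∈ V, R ≤ ‖z - p‖ →
      √‖z - p‖ * ‖fderiv ℝ Ψ z (‖z - p‖⁻¹ • (z - p)) - Complex.I * Ψ z‖ ≤ ε)
    {a b : ℝ} (hab : a < b) (him : ∀ s ∈ Ioo a b, (Ψ (s : ℝ)).im = 0) (s : ℝ) : Ψ s = 0 := by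
  have hopen : IsOpen {z : ℂ | z.im ≠ 0} := isOpen_ne_fun Complex.continuous_im continuous_const
  obtain ⟨N, hN, hKN, hNim⟩ := exists_compact_between hK hopen fun z hz h =>
    hz (by rw [← Complex.re_add_im z, h]; simpa using hreal z.re)
  obtain ⟨χ, hχ, hχ0, hχ1⟩ := exists_contDiff_cutoff hK hKN
  have hNV : ∀ z ∉ N, z ∈ V := fun z hz => by
    by_contra h
    exact hz (interior_subset (hKN h))
  have hNreal : ∀ s : ℝ, (s : ℂ) ∉ N := fun s hs => hNim hs (Complex.ofReal_im s)
  set v : ℂ → ℂ := fun z => χ z * Ψ z with hvdef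
  have hv : ContDiff ℝ 2 v := by
    rw [contDiff_iff_contDiffAt]
    intro z
    by_cases hz : z ∈ V
    · exact (Complex.ofRealCLM.contDiff.comp hχ).contDiffAt.mul (hΨ.contDiffAt (hV.mem_nhds hz))
    · refine contDiffAt_const (c := (0 : ℂ)) |>.congr_of_eventuallyEq ?_
      filter_upwards [hχ0 z hz] with y hy
      simp [hvdef, hy]
  have hvΨ : ∀ z ∉ N, v =ᶠ[𝓝 z] Ψ := fun z hz => by
    filter_upwards [hN.isClosed.isOpen_compl.mem_nhds hz] with y hy
    simp [hvdef, hχ1 y hy]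
  set g : ℂ → ℂ := fun y => lapC v y + v y with hgdef
  have hgc : Continuous g := (continuous_lapC hv).add hv.continuous
  have hg0 : ∀ z ∉ N, g z = 0 := fun z hz => by
    rw [hgdef]
    simp only
    rw [lapC_congr_of_eventuallyEq (hvΨ z hz), (hvΨ z hz).eq_of_nhds, hhelm z (hNV z hz)]
  have hgs : HasCompactSupport g := HasCompactSupport.intro hN hg0
  have hgt : tsupport g ⊆ N :=
    closure_minimal (fun z hz => by_contra fun h => hz (hg0 z h)) hN.isClosed
  obtain ⟨B, hB0, hB⟩ := hN.isBounded.subset_closedBall_lt 0 p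
  have hvout : IsOutgoing v p := by
    intro ε hε
    obtain ⟨R, hR, h⟩ := hout ε hε
    refine ⟨max R (B + 1), by positivity, fun y hy => ?_⟩
    have hyN : y ∉ N := fun hyN => by
      have := hB hyN
      rw [Metric.mem_closedBall, dist_eq_norm] at this
      linarith [(le_max_right R (B + 1)).trans hy]
    rw [(hvΨ y hyN).fderiv_eq, (hvΨ y hyN).eq_of_nhds]
    exact h y (hNV y hyN) ((le_max_left _ _).trans hy)
  obtain ⟨R, hR⟩ := hN.isBounded.exists_norm_le
  obtain ⟨C, hC⟩ := norm_axisPotential_le hN hR hgc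
  have hF : ∀ s : ℝ, ∫ y in N, hankel (axisDist s y) * g y = -(2 * π * Ψ s) := fun s => by
    rw [setIntegral_eq_integral_of_forall_compl_eq_zero fun y hy => by rw [hg0 y hy, mul_zero]]
    simp_rw [axisDist_ofReal]
    rw [← (hvΨ s (hNreal s)).eq_of_nhds]
    exact hvout.integral_hankel_mul hv hgs fun h => hNreal s (hgt h)
  have hzero := eq_zero_of_im_eq_zero_on_Ioo (isOpen_axisDomain hN)
    (differentiableOn_axisPotential hN hgc)
    (fun s y hy => axisDistSq_mem_slitPlane_of_ofReal (hNim hy)) (R := R)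
    (fun z hz y hy => axisDistSq_mem_slitPlane_of_re_lt
      (((Complex.re_le_norm y).trans (hR y hy)).trans_lt hz)) hC hab
    (fun t ht => by
      rw [hF t, ← Complex.ofReal_ofNat, ← Complex.ofReal_mul, Complex.neg_im,
        Complex.im_ofReal_mul, him t ht, mul_zero, neg_zero]) s
  rw [hF s, neg_eq_zero, mul_eq_zero] at hzero
  refine hzero.resolve_left ?_
  simp [pi_ne_zero]

lemma laplacian2_eq {ψ : R2 → ℂ} {x : R2} (hψ : ContDiffAt ℝ 2 ψ x) :
    laplacian2 ψ x = ∑ i : Fin 2, fderiv ℝ (fderiv ℝ ψ) x (EuclideanSpace.single i 1)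
      (EuclideanSpace.single i 1) := by
  have h : DifferentiableAt ℝ (fderiv ℝ ψ) x :=
    (hψ.fderiv_right (m := 1) (by norm_num)).differentiableAt one_ne_zero
  refine Finset.sum_congr rfl fun i _ => ?_
  rw [fderiv_clm_apply h (differentiableAt_const _)]
  simp

lemma IsRadiationSolution.sub {κ : ℝ} {U : Set R2} {ψ₁ ψ₂ : R2 → ℂ} (hU : IsOpen U)
    (h₁ : IsRadiationSolution κ U ψ₁) (h₂ : IsRadiationSolution κ U ψ₂) :
    IsRadiationSolution κ U (ψ₁ - ψ₂) := by
  obtain ⟨c₁, l₁, s₁⟩ := h₁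
  obtain ⟨c₂, l₂, s₂⟩ := h₂
  have d₁ : ∀ x ∈ U, ContDiffAt ℝ 2 ψ₁ x := fun x hx => c₁.contDiffAt (hU.mem_nhds hx)
  have d₂ : ∀ x ∈ U, ContDiffAt ℝ 2 ψ₂ x := fun x hx => c₂.contDiffAt (hU.mem_nhds hx)
  have hsub : ∀ x ∈ U, fderiv ℝ (ψ₁ - ψ₂) x = fderiv ℝ ψ₁ x - fderiv ℝ ψ₂ x := fun x hx =>
    fderiv_sub ((d₁ x hx).differentiableAt two_ne_zero) ((d₂ x hx).differentiableAt two_ne_zero)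
  refine ⟨c₁.sub c₂, fun x hx => ?_, fun ε hε => ?_⟩
  · have e1 : fderiv ℝ (ψ₁ - ψ₂) =ᶠ[𝓝 x] fderiv ℝ ψ₁ - fderiv ℝ ψ₂ := by
      filter_upwards [hU.mem_nhds hx] with y hy using hsub y hy
    have e2 : fderiv ℝ (fderiv ℝ (ψ₁ - ψ₂)) x
        = fderiv ℝ (fderiv ℝ ψ₁) x - fderiv ℝ (fderiv ℝ ψ₂) x := by
      rw [e1.fderiv_eq, fderiv_sub]
      · exact ((d₁ x hx).fderiv_right (m := 1) (by norm_num)).differentiableAt one_ne_zero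
      · exact ((d₂ x hx).fderiv_right (m := 1) (by norm_num)).differentiableAt one_ne_zero
    have h1 := l₁ x hx
    have h2 := l₂ x hx
    rw [laplacian2_eq (d₁ x hx)] at h1
    rw [laplacian2_eq (d₂ x hx)] at h2
    rw [laplacian2_eq (ψ := ψ₁ - ψ₂) ((d₁ x hx).sub (d₂ x hx)), e2]
    simp only [Fin.sum_univ_two, sub_apply, Pi.sub_apply] at h1 h2 ⊢
    linear_combination h1 - h2
  · obtain ⟨R₁, hR₁, e₁⟩ := s₁ (ε / 2) (by positivity)
    obtain ⟨R₂, hR₂, e₂⟩ := s₂ (ε / 2) (by positivity)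
    refine ⟨max R₁ R₂, by positivity, fun x hx hxR => ?_⟩
    have h1 := e₁ x hx ((le_max_left _ _).trans hxR)
    have h2 := e₂ x hx ((le_max_right _ _).trans hxR)
    rw [hsub x hx, sub_apply, Pi.sub_apply]
    refine lt_of_eq_of_lt ?_ ((norm_sub_le _ _).trans_lt (add_lt_add h1 h2)) |>.trans_eq
      (add_halves ε)
    congr 1
    ring

/-- The standard identification of the complex plane with `ℝ²`. -/
def complexToR2 : ℂ ≃ₗᵢ[ℝ] R2 := Complex.orthonormalBasisOneI.repr

lemma complexToR2_one : complexToR2 1 = EuclideanSpace.single 0 1 := by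
  have := Complex.orthonormalBasisOneI.repr_self 0
  simpa [complexToR2] using! this

lemma complexToR2_I : complexToR2 Complex.I = EuclideanSpace.single 1 1 := by
  have := Complex.orthonormalBasisOneI.repr_self 1
  simpa [complexToR2] using! this

lemma laplacian2_eq_rotate {ψ : R2 → ℂ} {x : R2} (hψ : ContDiffAt ℝ 2 ψ x) {u : ℂ}
    (hu : ‖u‖ = 1) : laplacian2 ψ x =
      fderiv ℝ (fderiv ℝ ψ) x (complexToR2 u) (complexToR2 u)
      + fderiv ℝ (fderiv ℝ ψ) x (complexToR2 (Complex.I * u)) (complexToR2 (Complex.I * u)) := by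
  rw [laplacian2_eq hψ, Fin.sum_univ_two, ← complexToR2_one, ← complexToR2_I]
  exact (bilin_add_bilin_rotate ((fderiv ℝ (fderiv ℝ ψ) x).bilinearComp
    (complexToR2 : ℂ →L[ℝ] R2) (complexToR2 : ℂ →L[ℝ] R2)) hu).symm

lemma fderiv_comp_add_clm {ψ : R2 → ℂ} {x₀ : R2} (B : ℂ →L[ℝ] R2) {z : ℂ}
    (hψ : DifferentiableAt ℝ ψ (x₀ + B z)) :
    fderiv ℝ (fun z => ψ (x₀ + B z)) z = (fderiv ℝ ψ (x₀ + B z)).comp B :=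
  (hψ.hasFDerivAt.comp z (B.hasFDerivAt.const_add x₀)).fderiv

lemma fderiv_fderiv_comp_add_clm {ψ : R2 → ℂ} {x₀ : R2} (B : ℂ →L[ℝ] R2) {z : ℂ}
    (hψ : ContDiffAt ℝ 2 ψ (x₀ + B z)) (h k : ℂ) :
    fderiv ℝ (fderiv ℝ fun z => ψ (x₀ + B z)) z h k
      = fderiv ℝ (fderiv ℝ ψ) (x₀ + B z) (B h) (B k) := by
  have hT : ContinuousAt (fun z => x₀ + B z) z := by fun_prop
  have e1 : (fderiv ℝ fun z => ψ (x₀ + B z)) =ᶠ[𝓝 z]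
      fun z => (ContinuousLinearMap.compL ℝ ℂ R2 ℂ).flip B (fderiv ℝ ψ (x₀ + B z)) := by
    filter_upwards [hT.eventually (hψ.eventually (by simp))] with y hy
    exact fderiv_comp_add_clm B (hy.differentiableAt two_ne_zero)
  have h2 : DifferentiableAt ℝ (fderiv ℝ ψ) (x₀ + B z) :=
    (hψ.fderiv_right (m := 1) (by norm_num)).differentiableAt one_ne_zero
  have h3 := ((ContinuousLinearMap.compL ℝ ℂ R2 ℂ).flip B).hasFDerivAt.comp z
    (h2.hasFDerivAt.comp z (B.hasFDerivAt.const_add x₀))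
  rw [e1.fderiv_eq]
  exact congrArg (fun L : ℂ →L[ℝ] ℂ →L[ℝ] ℂ => L h k) h3.fderiv

theorem im_determines_radiation_solution_on_line
    (κ : ℝ) (hκ : 0 < κ)
    (U : Set R2) (hUopen : IsOpen U) (hUconn : IsConnected U) (hKcpt : IsCompact Uᶜ)
    (x₀ θ : R2) (hθ : ‖θ‖ = 1)
    (L : Set R2) (hL : L = Set.range (fun s : ℝ => x₀ + s • θ)) (hLU : L ⊆ U)
    (a b : ℝ) (hab : a < b)
    (Λ : Set R2) (hΛ : Λ = (fun s : ℝ => x₀ + s • θ) '' Set.Ioo a b)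
    (ψ₁ ψ₂ : R2 → ℂ)
    (h₁ : IsRadiationSolution κ U ψ₁) (h₂ : IsRadiationSolution κ U ψ₂)
    (him : ∀ x ∈ Λ, (ψ₁ x).im = (ψ₂ x).im) :
    ∀ x ∈ L, ψ₁ x = ψ₂ x := by
  obtain ⟨hC, hHelm, hSom⟩ := h₁.sub hUopen h₂
  set ψ : R2 → ℂ := ψ₁ - ψ₂ with hψ
  set u : ℂ := complexToR2.symm θ with hu
  have hu1 : ‖u‖ = 1 := by rw [hu, LinearIsometryEquiv.norm_map, hθ]
  have huθ : complexToR2 u = θ := complexToR2.apply_symm_apply θ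
  have hu0 : u ≠ 0 := norm_pos_iff.1 (by rw [hu1]; exact one_pos)
  set B : ℂ →L[ℝ] R2 :=
    κ⁻¹ • (complexToR2 : ℂ →L[ℝ] R2).comp ((ContinuousLinearMap.mul ℝ ℂ).flip u)
  have hBapp : ∀ z, B z = κ⁻¹ • complexToR2 (z * u) := fun z => rfl
  have hBreal : ∀ s : ℝ, B s = (κ⁻¹ * s) • θ := fun s => by
    rw [hBapp, ← Complex.real_smul, map_smul, huθ, smul_smul]
  have hBnorm : ∀ z, ‖B z‖ = κ⁻¹ * ‖z‖ := fun z => by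
    rw [hBapp, norm_smul, LinearIsometryEquiv.norm_map, norm_mul, hu1, mul_one,
      Real.norm_of_nonneg (by positivity)]
  set p : ℂ := -(κ * complexToR2.symm x₀ / u) with hp
  have hBp : ∀ z, x₀ + B z = B (z - p) := fun z => by
    have : B p = -x₀ := by
      have e : p * u = (-κ) • complexToR2.symm x₀ := by
        rw [hp, Complex.real_smul]
        push_cast
        field_simp
      rw [hBapp, e, map_smul, complexToR2.apply_symm_apply, smul_smul]
      simp [hκ.ne']
    rw [map_sub, this, sub_neg_eq_add, add_comm]
  have hT : Continuous fun z => x₀ + B z := by fun_prop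
  have hcpt : IsCompact ((fun z => x₀ + B z) ⁻¹' U)ᶜ := by
    rw [← preimage_compl]
    refine Metric.isCompact_of_isClosed_isBounded (hKcpt.isClosed.preimage hT) ?_
    obtain ⟨M, hM⟩ := hKcpt.isBounded.exists_norm_le
    rw [Metric.isBounded_iff_subset_closedBall p]
    refine ⟨κ * M, fun z hz => ?_⟩
    have := hM (x₀ + B z) hz
    rw [hBp, hBnorm, inv_mul_le_iff₀ hκ] at this
    rwa [Metric.mem_closedBall, dist_eq_norm]
  have hdiff : ∀ z ∈ (fun z => x₀ + B z) ⁻¹' U, ContDiffAt ℝ 2 ψ (x₀ + B z) := fun z hz =>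
    hC.contDiffAt (hUopen.mem_nhds hz)
  have key := eq_zero_on_real_axis_of_im_eq_zero (V := (fun z => x₀ + B z) ⁻¹' U)
    (hUopen.preimage hT) hcpt ?_ (Ψ := fun z => ψ (x₀ + B z)) ?_ ?_ (p := p) ?_
    (mul_lt_mul_of_pos_left hab hκ) ?_
  · intro x hx
    rw [hL] at hx
    obtain ⟨s, rfl⟩ := hx
    have := key (κ * s)
    rw [hBreal, inv_mul_cancel_left₀ hκ.ne'] at this
    exact sub_eq_zero.1 this
  · intro s
    refine hLU ?_
    rw [hL]
    exact ⟨κ⁻¹ * s, by simp only [hBreal]⟩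
  · exact hC.comp (by fun_prop : ContDiff ℝ 2 fun z => x₀ + B z).contDiffOn fun z hz => hz
  · intro z hz
    have h := hHelm _ hz
    rw [laplacian2_eq_rotate (hdiff z hz) hu1] at h
    have hκ0 : (κ : ℂ) ≠ 0 := by exact_mod_cast hκ.ne'
    rw [lapC, fderiv_fderiv_comp_add_clm B (hdiff z hz), fderiv_fderiv_comp_add_clm B (hdiff z hz),
      hBapp 1, hBapp Complex.I, one_mul]
    simp only [map_smul, smul_apply, Complex.real_smul, Complex.ofReal_inv]
    have e : ψ (x₀ + B z) = (κ : ℂ)⁻¹ * ((κ : ℂ)⁻¹ * ((κ : ℂ) ^ 2 * ψ (x₀ + B z))) := by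
      field_simp
    rw [e, ← mul_add, ← mul_add, ← mul_add, ← mul_add, h, mul_zero, mul_zero]
  · intro ε hε
    obtain ⟨R, hR, h⟩ := hSom (ε * √κ) (by positivity)
    refine ⟨κ * R, by positivity, fun z hz hzR => ?_⟩
    have hxR : R ≤ ‖x₀ + B z‖ := by
      rw [hBp, hBnorm, le_inv_mul_iff₀ hκ]
      exact hzR
    have hz0 : 0 < ‖z - p‖ := lt_of_lt_of_le (by positivity) hzR
    have h1 := h _ hz hxR
    have hx : ‖x₀ + B z‖ = κ⁻¹ * ‖z - p‖ := by rw [hBp, hBnorm]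
    have e1 : fderiv ℝ (fun z => ψ (x₀ + B z)) z (‖z - p‖⁻¹ • (z - p))
        = κ⁻¹ * fderiv ℝ ψ (x₀ + B z) (‖x₀ + B z‖⁻¹ • (x₀ + B z)) := by
      rw [fderiv_comp_add_clm B ((hdiff z hz).differentiableAt two_ne_zero), hx]
      simp only [ContinuousLinearMap.comp_apply, map_smul, ← hBp]
      rw [mul_inv, inv_inv, mul_smul]
      simp only [Complex.real_smul, Complex.ofReal_inv]
      have hκ0 : (κ : ℂ) ≠ 0 := by exact_mod_cast hκ.ne'
      field_simp
    have e2 : √‖z - p‖ = √κ * √‖x₀ + B z‖ := by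
      rw [← Real.sqrt_mul hκ.le, hx, mul_inv_cancel_left₀ hκ.ne']
    have e3 : (κ : ℂ)⁻¹ * fderiv ℝ ψ (x₀ + B z) (‖x₀ + B z‖⁻¹ • (x₀ + B z))
        - Complex.I * ψ (x₀ + B z) = (κ : ℂ)⁻¹ *
        (fderiv ℝ ψ (x₀ + B z) (‖x₀ + B z‖⁻¹ • (x₀ + B z)) - Complex.I * κ * ψ (x₀ + B z)) := by
      have hκ0 : (κ : ℂ) ≠ 0 := by exact_mod_cast hκ.ne'
      field_simp
    rw [norm_mul, Complex.norm_real, Real.norm_of_nonneg (Real.sqrt_nonneg _)] at h1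
    rw [e1, Complex.ofReal_inv, e3, e2, norm_mul, norm_inv, Complex.norm_real,
      Real.norm_of_nonneg hκ.le]
    have hs : √κ * √κ = κ := Real.mul_self_sqrt hκ.le
    calc _ = √κ * κ⁻¹ * (√‖x₀ + B z‖ * ‖fderiv ℝ ψ (x₀ + B z) (‖x₀ + B z‖⁻¹ • (x₀ + B z))
          - Complex.I * κ * ψ (x₀ + B z)‖) := by ring
      _ ≤ √κ * κ⁻¹ * (ε * √κ) := by gcongr
      _ = ε * (κ⁻¹ * (√κ * √κ)) := by ring
      _ = ε := by rw [hs, inv_mul_cancel₀ hκ.ne', mul_one]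
  · intro t ht
    have h := him (x₀ + B t) (by
      rw [hΛ]
      refine ⟨κ⁻¹ * t, ⟨?_, ?_⟩, by rw [hBreal]⟩
      · rw [lt_inv_mul_iff₀ hκ]
        exact ht.1
      · rw [inv_mul_lt_iff₀ hκ]
        exact ht.2)
    rw [hψ, Pi.sub_apply, Complex.sub_im, h, sub_self]
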